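/- arXiv:2101.08225 — 2 statements merged into one kernel-verified Lean document; each statement's English description precedes it below -/
import Mathlib

section
/- There exist finite simple graphs Γ and Δ such that the outer automorphism group Out(A_Γ) has a finite-index subgroup isomorphic to the right-angled Artin group A_Δ, and Δ contains two maximal cliques of different cardinalities (so the flag complex of Δ is not Cohen–Macaulay and A_Δ is not a duality group). -/
open scoped commutatorElement

/-- The set of relators of a right-angled Artin group: commutators of adjacent vertices. -/
def raagRels {V : Type*} (Γ : SimpleGraph V) : Set (FreeGroup V) :=
  {r | ∃ v w : V, Γ.Adj v w ∧ r = ⁅FreeGroup.of v, FreeGroup.of w⁆}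

/-- The right-angled Artin group of a simple graph. -/
abbrev RAAG {V : Type*} (Γ : SimpleGraph V) : Type _ := PresentedGroup (raagRels Γ)

instance conjRangeNormal (G : Type*) [Group G] :
    ((MulAut.conj : G →* MulAut G).range).Normal := by
  constructor
  rintro - ⟨g, rfl⟩ φ
  refine ⟨φ g, ?_⟩
  ext x
  simp [MulAut.conj_apply, mul_assoc]

/-- The outer automorphism group of a group: the quotient of the automorphism group
by the inner automorphisms. -/
def Out (G : Type*) [Group G] : Type _ :=
  MulAut G ⧸ (MulAut.conj : G →* MulAut G).range

instance (G : Type*) [Group G] : Group (Out G) :=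
  QuotientGroup.Quotient.group _

/-- A maximal clique: a clique that is maximal under inclusion among cliques. -/
def IsMaxClique {V : Type*} (Γ : SimpleGraph V) (K : Set V) : Prop :=
  Γ.IsClique K ∧ ∀ K' : Set V, Γ.IsClique K' → K ⊆ K' → K' = K

/-!
Let `Λ` be the complete graph on five vertices without two of the edges at a vertex `t`, and let `Γ`
be its corona, obtained by attaching a leaf to every vertex of `Λ`. The group `A_Γ` acts on its
Bass-Serre tree over the core `A_Λ`, with cyclic edge stabilizers and with the conjugates of `A_Λ`
as vertex stabilizers. Since `A_Λ` is nonabelian and has two independent central elements, each copy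
of it in `A_Γ` fixes a vertex, so automorphisms preserve the core up to conjugacy. After composition
with an inner automorphism, an automorphism that acts trivially on the characters modulo `3` is the
identity on the core, and it multiplies the leaf at `v`, on the left and on the right, by elements
of `A_Λ` that commute with `v`.

Consequently a finite index subgroup of `Out(A_Γ)` is a product of special subgroups of `A_Λ`, two
for each vertex of `Λ`, and such a product is the right-angled Artin group of a join of induced
subgraphs of `Λ`. A maximal clique of a join is a union of maximal cliques of the factors, and the
factor spanned by the neighbors of a vertex adjacent to all others, namely a complete graph on three
vertices with a fourth vertex attached to one of them, has maximal cliques with two and with three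
vertices.
-/

namespace RAAG

section Basic

variable {V : Type*} {Γ : SimpleGraph V} {G : Type*} [Group G]

/-- The standard generator of a right-angled Artin group attached to a vertex. -/
def gen (Γ : SimpleGraph V) (v : V) : RAAG Γ := PresentedGroup.of v

theorem commute_gen {v w : V} (h : Γ.Adj v w) : Commute (gen Γ v) (gen Γ w) := by
  have hrel : PresentedGroup.mk (raagRels Γ) ⁅FreeGroup.of v, FreeGroup.of w⁆ = 1 :=
    PresentedGroup.one_of_mem ⟨v, w, h, rfl⟩
  rw [map_commutatorElement] at hrel
  exact commutatorElement_eq_one_iff_commute.mp hrel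

/-- The universal property of a right-angled Artin group. -/
def lift (f : V → G) (hf : ∀ v w, Γ.Adj v w → Commute (f v) (f w)) : RAAG Γ →* G :=
  PresentedGroup.toGroup (f := f) (by
    rintro _ ⟨v, w, h, rfl⟩
    rw [map_commutatorElement, FreeGroup.lift_apply_of, FreeGroup.lift_apply_of]
    exact commutatorElement_eq_one_iff_commute.mpr (hf v w h))

@[simp] theorem lift_gen (f : V → G) (hf : ∀ v w, Γ.Adj v w → Commute (f v) (f w)) (v : V) :
    lift f hf (gen Γ v) = f v :=
  PresentedGroup.toGroup.of _

theorem hom_ext {f g : RAAG Γ →* G} (h : ∀ v, f (gen Γ v) = g (gen Γ v)) : f = g :=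
  PresentedGroup.ext h

/-- The special subgroup generated by the vertices in `S`. -/
def special (Γ : SimpleGraph V) (S : Set V) : Subgroup (RAAG Γ) :=
  Subgroup.closure (gen Γ '' S)

theorem gen_mem_special {S : Set V} {v : V} (hv : v ∈ S) : gen Γ v ∈ special Γ S :=
  Subgroup.subset_closure ⟨v, hv, rfl⟩

theorem special_le {S : Set V} {H : Subgroup (RAAG Γ)} :
    special Γ S ≤ H ↔ ∀ v ∈ S, gen Γ v ∈ H := by
  rw [special, Subgroup.closure_le, Set.image_subset_iff]
  rfl

theorem special_mono {S T : Set V} (h : S ⊆ T) : special Γ S ≤ special Γ T :=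
  special_le.mpr fun _ hv => gen_mem_special (h hv)

theorem special_univ : special Γ Set.univ = ⊤ := by
  rw [special, Set.image_univ]
  exact PresentedGroup.closure_range_of _

theorem map_special (φ : RAAG Γ →* G) (S : Set V) :
    (special Γ S).map φ = Subgroup.closure ((fun v => φ (gen Γ v)) '' S) := by
  rw [special, MonoidHom.map_closure, Set.image_image]

theorem eqOn_special {φ ψ : RAAG Γ →* G} {S : Set V}
    (h : ∀ v ∈ S, φ (gen Γ v) = ψ (gen Γ v)) {x : RAAG Γ} (hx : x ∈ special Γ S) : φ x = ψ x :=
  MonoidHom.eqOn_closure (by rintro _ ⟨v, hv, rfl⟩; exact h v hv) hx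

theorem commute_of_mem_special {S T : Set V}
    (h : ∀ v ∈ S, ∀ w ∈ T, Commute (gen Γ v) (gen Γ w)) {x y : RAAG Γ}
    (hx : x ∈ special Γ S) (hy : y ∈ special Γ T) : Commute x y := by
  have hle : special Γ S ≤ Subgroup.centralizer (special Γ T) := by
    rw [special_le, special, Subgroup.centralizer_closure]
    rintro v hv _ ⟨w, hw, rfl⟩
    exact (h v hv w hw).symm.eq
  exact (hle hx y hy).symm

theorem commute_gen_of_mem_special {v : V} {S : Set V} (h : S ⊆ insert v (Γ.neighborSet v))
    {x : RAAG Γ} (hx : x ∈ special Γ S) : Commute (gen Γ v) x := by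
  refine commute_of_mem_special (S := {v}) ?_ (gen_mem_special rfl) hx
  rintro _ rfl w hw
  rcases h hw with rfl | hvw
  exacts [Commute.refl _, commute_gen hvw]

open Classical in
/-- The retraction onto the special subgroup of `S` killing all other generators. -/
noncomputable def retraction (Γ : SimpleGraph V) (S : Set V) : RAAG Γ →* RAAG Γ :=
  lift (fun v => if v ∈ S then gen Γ v else 1) fun v w h => by
    split_ifs
    exacts [commute_gen h, Commute.one_right _, Commute.one_left _, Commute.one_left _]

theorem retraction_gen_of_mem {S : Set V} {v : V} (hv : v ∈ S) :
    retraction Γ S (gen Γ v) = gen Γ v := by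
  simp [retraction, hv]

theorem retraction_gen_of_notMem {S : Set V} {v : V} (hv : v ∉ S) :
    retraction Γ S (gen Γ v) = 1 := by
  simp [retraction, hv]

theorem retraction_mem_special (S : Set V) (x : RAAG Γ) : retraction Γ S x ∈ special Γ S := by
  have hle : special Γ Set.univ ≤ (special Γ S).comap (retraction Γ S) := by
    refine special_le.mpr fun v _ => Subgroup.mem_comap.mpr ?_
    by_cases hv : v ∈ S
    · rw [retraction_gen_of_mem hv]
      exact gen_mem_special hv
    · rw [retraction_gen_of_notMem hv]
      exact one_mem _
  exact hle (special_univ (Γ := Γ) ▸ Subgroup.mem_top x)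

theorem retraction_eq_self {S T : Set V} (hTS : T ⊆ S) {x : RAAG Γ} (hx : x ∈ special Γ T) :
    retraction Γ S x = x :=
  eqOn_special (ψ := MonoidHom.id _) (fun _ hv => retraction_gen_of_mem (hTS hv)) hx

theorem retraction_eq_one {S T : Set V} (hST : Disjoint S T) {x : RAAG Γ}
    (hx : x ∈ special Γ T) : retraction Γ S x = 1 :=
  eqOn_special (ψ := 1)
    (fun _ hv => retraction_gen_of_notMem (hST.notMem_of_mem_right hv)) hx

open Classical in
/-- The exponent sum of the generator `v`. -/
noncomputable def expSum (Γ : SimpleGraph V) (v : V) : RAAG Γ →* Multiplicative ℤ :=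
  lift (fun w => if w = v then Multiplicative.ofAdd 1 else 1) fun _ _ _ => Commute.all _ _

theorem expSum_gen (v : V) : expSum Γ v (gen Γ v) = Multiplicative.ofAdd 1 := by
  rw [expSum, lift_gen, if_pos rfl]

theorem expSum_gen_zpow (v : V) (n : ℤ) :
    expSum Γ v (gen Γ v ^ n) = Multiplicative.ofAdd n := by
  rw [map_zpow, expSum_gen, ← ofAdd_zsmul, smul_eq_mul, mul_one]

theorem expSum_gen_of_ne {v w : V} (h : w ≠ v) : expSum Γ v (gen Γ w) = 1 := by
  simp [expSum, h]

theorem expSum_eq_one {S : Set V} {v : V} (hv : v ∉ S) {x : RAAG Γ} (hx : x ∈ special Γ S) :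
    expSum Γ v x = 1 :=
  eqOn_special (ψ := 1) (fun _ hw => expSum_gen_of_ne (ne_of_mem_of_not_mem hw hv)) hx

theorem eq_zero_of_gen_zpow_eq {v w : V} (hvw : v ≠ w) {m n : ℤ}
    (h : gen Γ v ^ m = gen Γ w ^ n) : m = 0 ∧ n = 0 := by
  have hv := congrArg (expSum Γ v) h
  have hw := congrArg (expSum Γ w) h
  rw [expSum_gen_zpow, map_zpow, expSum_gen_of_ne hvw.symm, one_zpow, ofAdd_eq_one] at hv
  rw [expSum_gen_zpow, map_zpow, expSum_gen_of_ne hvw, one_zpow, eq_comm, ofAdd_eq_one] at hw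
  exact ⟨hv, hw⟩

open Matrix.SpecialLinearGroup ModularGroup in
theorem not_commute_gen_pow {v w : V} (hvw : v ≠ w) (hadj : ¬Γ.Adj v w) {m n : ℕ}
    (hm : 0 < m) (hn : 0 < n) : ¬Commute (gen Γ v ^ m) (gen Γ w ^ n) := by
  classical
  let ρ : RAAG Γ →* Matrix.SpecialLinearGroup (Fin 2) ℤ :=
    lift (fun x => if x = v then T else if x = w then T.transpose else 1) fun x y hxy => by
      split_ifs <;> subst_vars <;> simp_all [Γ.adj_comm]
  have coe_T_pow (k : ℕ) : ((T ^ k : Matrix.SpecialLinearGroup (Fin 2) ℤ) :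
      Matrix (Fin 2) (Fin 2) ℤ) = !![1, (k : ℤ); 0, 1] := by
    simpa only [zpow_natCast] using coe_T_zpow k
  have hv : ((ρ (gen Γ v ^ m)) : Matrix (Fin 2) (Fin 2) ℤ) = !![1, (m : ℤ); 0, 1] := by
    rw [map_pow, lift_gen, if_pos rfl, coe_T_pow]
  have hw : ((ρ (gen Γ w ^ n)) : Matrix (Fin 2) (Fin 2) ℤ) = !![1, (n : ℤ); 0, 1].transpose := by
    rw [map_pow, lift_gen, if_neg hvw.symm, if_pos rfl, coe_pow, coe_transpose,
      ← Matrix.transpose_pow, ← coe_pow, coe_T_pow]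
  intro hc
  have hentry := congrArg (fun A => A.1 0 0) (hc.map ρ).eq
  simp only [coe_mul, hv, hw] at hentry
  simp [Matrix.mul_apply, hm.ne', hn.ne'] at hentry

end Basic

end RAAG

attribute [local instance] Finsupp.comapSMul Finsupp.comapMulAction
  Finsupp.comapDistribMulAction

open groupCohomology (IsCocycle₁)

section Cocycle

variable {G A : Type*} [Group G] [AddCommGroup A] [DistribMulAction G A]

theorem isCocycle₁_eq_zero_of_mem_closure {δ : G → A} (hδ : IsCocycle₁ δ) {S : Set G}
    (hS : ∀ s ∈ S, δ s = 0) {x : G} (hx : x ∈ Subgroup.closure S) : δ x = 0 := by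
  induction hx using Subgroup.closure_induction with
  | mem x hx => exact hS x hx
  | one => exact groupCohomology.map_one_of_isCocycle₁ hδ
  | mul x y _ _ hx hy => rw [hδ, hx, hy, smul_zero, add_zero]
  | inv x _ hx =>
    rw [← smul_eq_zero_iff_eq x, groupCohomology.map_inv_of_isCocycle₁ hδ, hx, neg_zero]

variable {V : Type*} {Γ : SimpleGraph V} [DistribMulAction (RAAG Γ) A]

theorem RAAG.exists_isCocycle₁ (d : V → A)
    (hd : ∀ v w, Γ.Adj v w → d v + gen Γ v • d w = d w + gen Γ w • d v) :
    ∃ δ : RAAG Γ → A, IsCocycle₁ δ ∧ ∀ v, δ (gen Γ v) = d v := by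
  let φ : RAAG Γ →* MulAut (Multiplicative A) :=
    (MulAutMultiplicative (G := A)).symm.toMonoidHom.comp (DistribMulAction.toAddAut (RAAG Γ) A)
  let s : RAAG Γ →* Multiplicative A ⋊[φ] RAAG Γ :=
    lift (fun v => ⟨Multiplicative.ofAdd (d v), gen Γ v⟩) fun v w h =>
      SemidirectProduct.ext (hd v w h) (commute_gen h)
  have hs (g : RAAG Γ) : (s g).right = g :=
    DFunLike.congr_fun (hom_ext (f := SemidirectProduct.rightHom.comp s) (g := .id _)
      fun v => by simp [s]) g
  refine ⟨fun g => (s g).left.toAdd, fun g h => ?_, fun v => by simp [s]⟩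
  simp only [map_mul, SemidirectProduct.mul_left, hs, toAdd_mul, add_comm (s g).left.toAdd]
  rfl

end Cocycle

section OrbitSum

open MulAction (orbitRel)

variable {G E : Type*} [Group G] [MulAction G E]

theorem orbitRel_zpowers_mk_eq_iff {z : G} {x y : E} :
    (Quotient.mk'' x : orbitRel.Quotient (Subgroup.zpowers z) E) = Quotient.mk'' y ↔
      ∃ m : ℤ, z ^ m • y = x := by
  rw [Quotient.eq'', MulAction.orbitRel_apply]
  exact ⟨fun ⟨⟨_, m, rfl⟩, h⟩ => ⟨m, h⟩, fun ⟨m, hm⟩ => ⟨⟨z ^ m, m, rfl⟩, hm⟩⟩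

/-- Summation of a finitely supported function along the orbits of the cyclic group generated by
`z`. Its kernel consists of the coboundaries of `z`. -/
noncomputable def orbitSum (z : G) :
    (E →₀ ℤ) →+ (orbitRel.Quotient (Subgroup.zpowers z) E →₀ ℤ) :=
  Finsupp.mapDomain.addMonoidHom Quotient.mk''

theorem orbitSum_single (z : G) (e : E) (n : ℤ) :
    orbitSum z (Finsupp.single e n) = Finsupp.single (Quotient.mk'' e) n :=
  Finsupp.mapDomain_single

theorem orbitSum_smul (z : G) (f : E →₀ ℤ) : orbitSum z (z • f) = orbitSum z f := by
  induction f using Finsupp.induction_linear with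
  | zero => rw [smul_zero]
  | add f g hf hg => rw [smul_add, map_add, map_add, hf, hg]
  | single e n =>
    rw [Finsupp.comapSMul_single, orbitSum_single, orbitSum_single,
      orbitRel_zpowers_mk_eq_iff.mpr ⟨1, by rw [zpow_one]⟩]

theorem orbitSum_smul_apply_of_commute {z k : G} (h : Commute k z) (f : E →₀ ℤ) (e : E) :
    orbitSum z (k • f) (Quotient.mk'' (k • e)) = orbitSum z f (Quotient.mk'' e) := by
  classical
  induction f using Finsupp.induction_linear with
  | zero => rw [smul_zero, map_zero, Finsupp.zero_apply, Finsupp.zero_apply]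
  | add f g hf hg =>
    rw [smul_add, map_add, map_add, Finsupp.add_apply, Finsupp.add_apply, hf, hg]
  | single x n =>
    have hiff : (Quotient.mk'' (k • x) : orbitRel.Quotient (Subgroup.zpowers z) E) =
        Quotient.mk'' (k • e) ↔
        (Quotient.mk'' x : orbitRel.Quotient (Subgroup.zpowers z) E) = Quotient.mk'' e := by
      simp only [orbitRel_zpowers_mk_eq_iff, smul_smul, ← (h.zpow_right _).eq]
      simp only [mul_smul, smul_left_cancel_iff]
    simp only [Finsupp.comapSMul_single, orbitSum_single, Finsupp.single_apply, hiff]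

theorem exists_smul_sub_eq_single_zpow_sub (z : G) (e : E) (n m : ℤ) :
    ∃ u : E →₀ ℤ, z • u - u = Finsupp.single (z ^ m • e) n - Finsupp.single e n := by
  induction m using Int.induction_on with
  | zero => exact ⟨0, by simp⟩
  | succ i ih =>
    obtain ⟨u, hu⟩ := ih
    refine ⟨u + Finsupp.single (z ^ (i : ℤ) • e) n, ?_⟩
    rw [smul_add, Finsupp.comapSMul_single, smul_smul, ← zpow_one_add, add_comm (1 : ℤ),
      add_sub_add_comm, hu]
    abel
  | pred i ih =>
    obtain ⟨u, hu⟩ := ih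
    refine ⟨u - Finsupp.single (z ^ (-(i : ℤ) - 1) • e) n, ?_⟩
    rw [smul_sub, Finsupp.comapSMul_single, smul_smul, ← zpow_one_add, add_sub_cancel,
      sub_sub_sub_comm, hu]
    abel

theorem exists_smul_sub_eq_of_orbitSum_eq_zero (z : G) {f : E →₀ ℤ} (hf : orbitSum z f = 0) :
    ∃ u : E →₀ ℤ, z • u - u = f := by
  have sub_out (f : E →₀ ℤ) : ∃ u : E →₀ ℤ,
      z • u - u = f - Finsupp.mapDomain Quotient.out (orbitSum z f) := by
    induction f using Finsupp.induction_linear with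
    | zero => exact ⟨0, by simp⟩
    | add f g hf hg =>
      obtain ⟨u, hu⟩ := hf
      obtain ⟨v, hv⟩ := hg
      refine ⟨u + v, ?_⟩
      rw [map_add, Finsupp.mapDomain_add, smul_add, add_sub_add_comm, add_sub_add_comm, hu, hv]
    | single e n =>
      rw [orbitSum_single, Finsupp.mapDomain_single]
      obtain ⟨m, hm⟩ := orbitRel_zpowers_mk_eq_iff.mp
        (Quotient.out_eq' (Quotient.mk'' e : orbitRel.Quotient (Subgroup.zpowers z) E)).symm
      conv => enter [1, u, 2, 1]; rw [← hm]
      exact exists_smul_sub_eq_single_zpow_sub z _ n m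
  obtain ⟨u, hu⟩ := sub_out f
  exact ⟨u, by rw [hu, hf, Finsupp.mapDomain_zero, sub_zero]⟩

end OrbitSum

namespace RAAG

variable {V : Type*} {Γ : SimpleGraph V}

theorem gen_smul_mk_one {S : Set V} {v : V} (hv : v ∈ S) :
    gen Γ v • ((1 : RAAG Γ) : RAAG Γ ⧸ special Γ S) = ((1 : RAAG Γ) : RAAG Γ ⧸ special Γ S) := by
  rw [MulAction.Quotient.smul_coe, eq_comm, QuotientGroup.eq]
  simpa using gen_mem_special hv

/-- The witness is a cocycle with values in the permutation module on the cosets of the link of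
`v`, sending `v` to the base coset and all other generators to `0`. -/
theorem exists_eq_gen_zpow_mul_of_commute {v : V} {g : RAAG Γ} (hg : Commute (gen Γ v) g) :
    ∃ n : ℤ, ∃ c ∈ special Γ (Γ.neighborSet v), g = gen Γ v ^ n * c := by
  classical
  let e : RAAG Γ ⧸ special Γ (Γ.neighborSet v) := ((1 : RAAG Γ) : RAAG Γ ⧸ _)
  have hfix (w : V) (hw : Γ.Adj v w) : gen Γ w • e = e := gen_smul_mk_one hw
  obtain ⟨δ, hδ, hδgen⟩ := exists_isCocycle₁ (Γ := Γ)
    (fun w => if w = v then Finsupp.single e (1 : ℤ) else 0) fun x y hxy => by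
      split_ifs with hx hy hy
      · exact absurd (hx.trans hy.symm) hxy.ne
      · subst hx; simp [hfix y hxy]
      · subst hy; simp [hfix x hxy.symm]
      · simp
  have hδv : δ (gen Γ v) = Finsupp.single e 1 := by rw [hδgen, if_pos rfl]
  have hcomm : gen Γ v • δ g + Finsupp.single e 1 = Finsupp.single (g • e) 1 + δ g := by
    rw [← hδv, ← hδ, hg.eq, hδ, hδv, Finsupp.comapSMul_single]
  have hsum := congrArg (orbitSum (gen Γ v)) hcomm
  rw [map_add, map_add, orbitSum_smul, add_comm, add_left_inj, orbitSum_single, orbitSum_single]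
    at hsum
  obtain ⟨n, hn⟩ := orbitRel_zpowers_mk_eq_iff.mp
    ((Finsupp.single_left_injective one_ne_zero) hsum).symm
  refine ⟨n, (gen Γ v ^ n)⁻¹ * g, ?_, by simp⟩
  rw [MulAction.Quotient.smul_coe, MulAction.Quotient.smul_coe, QuotientGroup.eq] at hn
  simpa using hn

end RAAG

section FixedPoint

variable {G : Type*} [Group G]

theorem exists_pow_smul_eq_of_finite {X : Type*} [MulAction G X] {M : Set X} (hM : M.Finite)
    {k : G} {x : X} (h : ∀ n : ℕ, k ^ n • x ∈ M) : ∃ n : ℕ, 0 < n ∧ k ^ n • x = x := by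
  obtain ⟨i, j, hij, heq⟩ := Set.Finite.exists_lt_map_eq_of_forall_mem h hM
  refine ⟨j - i, Nat.sub_pos_of_lt hij, smul_left_cancel (k ^ i) ?_⟩
  rw [smul_smul, ← pow_add, Nat.add_sub_cancel' hij.le, heq]

theorem commute_of_mem_isCyclic {S : Subgroup G} [IsCyclic S] {g h : G} (hg : g ∈ S)
    (hh : h ∈ S) : Commute g h :=
  congrArg Subtype.val (IsMulCommutative.is_comm.comm (⟨g, hg⟩ : S) ⟨h, hh⟩)

variable {E : Type*} [MulAction G E]

theorem exists_pow_mul_zpow_smul_eq {z k : G} (hk : Commute k z) {δ : G → E →₀ ℤ}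
    (hδ : IsCocycle₁ δ) {e : E} (he : orbitSum z (δ z) (Quotient.mk'' e) ≠ 0) :
    ∃ n : ℕ, 0 < n ∧ ∃ m : ℤ, (z ^ m * k ^ n) • e = e := by
  have hinv (k : G) (hk : Commute k z) : orbitSum z (k • δ z) = orbitSum z (δ z) := by
    have hcomm : k • δ z + δ k = z • δ k + δ z := by rw [← hδ, hk.eq, hδ]
    have hsum := congrArg (orbitSum z) hcomm
    rwa [map_add, map_add, orbitSum_smul, add_comm, add_right_inj] at hsum
  have hmem (n : ℕ) : (Quotient.mk'' (k ^ n • e) :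
      MulAction.orbitRel.Quotient (Subgroup.zpowers z) E) ∈ (orbitSum z (δ z)).support := by
    rw [Finsupp.mem_support_iff, ← hinv _ (hk.pow_left n),
      orbitSum_smul_apply_of_commute (hk.pow_left n)]
    exact he
  obtain ⟨i, j, hij, heq⟩ :=
    Set.Finite.exists_lt_map_eq_of_forall_mem hmem (orbitSum z (δ z)).support.finite_toSet
  obtain ⟨m, hm⟩ := orbitRel_zpowers_mk_eq_iff.mp heq
  refine ⟨j - i, Nat.sub_pos_of_lt hij, m, smul_left_cancel (k ^ i) ?_⟩
  rw [smul_smul, ← mul_assoc, ((hk.pow_left i).zpow_right m).eq, mul_assoc, ← pow_add,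
    Nat.add_sub_cancel' hij.le, mul_smul, hm]

theorem exists_smul_sub_eq_cocycle {z b w : G} (hb : Commute b z) (hw : Commute w z)
    {δ : G → E →₀ ℤ} (hδ : IsCocycle₁ δ) (hstab : ∀ e : E, IsCyclic (MulAction.stabilizer G e))
    (hbw : ∀ m n : ℕ, 0 < m → 0 < n → ¬Commute (b ^ m) (w ^ n)) :
    ∃ u : E →₀ ℤ, z • u - u = δ z := by
  refine exists_smul_sub_eq_of_orbitSum_eq_zero z (Finsupp.ext fun q => ?_)
  induction q using Quotient.inductionOn' with | _ e
  by_contra he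
  obtain ⟨n, hn, i, hni⟩ := exists_pow_mul_zpow_smul_eq hb hδ he
  obtain ⟨m, hm, j, hmj⟩ := exists_pow_mul_zpow_smul_eq hw hδ he
  have hzb : Commute (z ^ j) (z ^ i * b ^ n) :=
    .mul_right (.zpow_zpow_self z j i) ((hb.pow_left n).zpow_right j).symm
  have hzw : Commute (z ^ i) (w ^ m) := ((hw.pow_left m).zpow_right i).symm
  have hcomm : Commute (z ^ i * b ^ n) (z ^ j * w ^ m) :=
    have := hstab e
    commute_of_mem_isCyclic (S := MulAction.stabilizer G e) hni hmj
  have hcomm' : Commute (z ^ i * b ^ n) (w ^ m) := by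
    simpa using hzb.symm.inv_right.mul_right hcomm
  exact hbw n m hn hm (by simpa using hzw.inv_left.mul_left hcomm')

theorem cocycle_apply_eq_of_commute {z k : G} (hk : Commute k z) {δ : G → E →₀ ℤ}
    (hδ : IsCocycle₁ δ) {u : E →₀ ℤ} (hu : z • u - u = δ z) {e : E}
    (he : ∀ n : ℕ, 0 < n → z ^ n • e ≠ e) : δ k e = (k • u - u) e := by
  set η := δ k - (k • u - u) with hη
  have hinv : z • η = η := by
    have hcomm : k • δ z + δ k = z • δ k + δ z := by rw [← hδ, hk.eq, hδ]
    rw [← hu, smul_sub, smul_smul, hk.eq, mul_smul] at hcomm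
    rw [hη, smul_sub, smul_sub, eq_sub_of_add_eq hcomm.symm]
    abel
  have hpow (n : ℕ) : η (z ^ n • e) = η e := by
    induction n with
    | zero => rw [pow_zero, one_smul]
    | succ n ih => rw [← ih, ← hinv, Finsupp.comapSMul_apply, pow_succ', mul_smul,
        inv_smul_smul, hinv]
  refine sub_eq_zero.mp (by_contra fun hne => ?_)
  obtain ⟨n, hn, hfix⟩ := exists_pow_smul_eq_of_finite η.support.finite_toSet (k := z) (x := e)
    fun n => Finsupp.mem_support_iff.mpr (hpow n ▸ hne)
  exact he n hn hfix

theorem pow_smul_ne_of_isCyclic_stabilizer {z₁ z₂ : G}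
    (hind : ∀ m n : ℤ, z₁ ^ m = z₂ ^ n → m = 0 ∧ n = 0) {e : E}
    [IsCyclic (MulAction.stabilizer G e)] {m n : ℕ} (hm : 0 < m) (hn : 0 < n)
    (h₁ : z₁ ^ m • e = e) : z₂ ^ n • e ≠ e := by
  intro h₂
  obtain ⟨c, hc⟩ := IsCyclic.exists_generator (α := MulAction.stabilizer G e)
  obtain ⟨p, hp⟩ := hc ⟨z₁ ^ m, h₁⟩
  obtain ⟨q, hq⟩ := hc ⟨z₂ ^ n, h₂⟩
  replace hp : (c : G) ^ p = z₁ ^ m := congrArg Subtype.val hp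
  replace hq : (c : G) ^ q = z₂ ^ n := congrArg Subtype.val hq
  have hpq : z₁ ^ ((m : ℤ) * q) = z₂ ^ ((n : ℤ) * p) := by
    rw [zpow_mul, zpow_mul, zpow_natCast, zpow_natCast, ← hp, ← hq, zpow_comm]
  have hq0 : q = 0 := (mul_eq_zero.mp (hind _ _ hpq).1).resolve_left (by positivity)
  rw [hq0, zpow_zero, ← zpow_natCast] at hq
  exact hn.ne' (by exact_mod_cast (hind 0 n (by rw [zpow_zero, hq])).2)

/-- Where `z₁` has infinite orbits the cocycle agrees with the coboundary that computes it on `z₁`;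
elsewhere `z₂` has infinite orbits, and the two primitives are glued along this partition. -/
theorem exists_forall_mem_cocycle_eq {K : Subgroup G} {z₁ z₂ b w : G} (hb : b ∈ K) (hw : w ∈ K)
    (hz₁ : ∀ k ∈ K, Commute k z₁) (hz₂ : ∀ k ∈ K, Commute k z₂)
    (hind : ∀ m n : ℤ, z₁ ^ m = z₂ ^ n → m = 0 ∧ n = 0)
    (hbw : ∀ m n : ℕ, 0 < m → 0 < n → ¬Commute (b ^ m) (w ^ n)) {δ : G → E →₀ ℤ}
    (hδ : IsCocycle₁ δ) (hstab : ∀ e : E, IsCyclic (MulAction.stabilizer G e)) :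
    ∃ u : E →₀ ℤ, ∀ k ∈ K, δ k = k • u - u := by
  classical
  obtain ⟨u₁, hu₁⟩ := exists_smul_sub_eq_cocycle (hz₁ b hb) (hz₁ w hw) hδ hstab hbw
  obtain ⟨u₂, hu₂⟩ := exists_smul_sub_eq_cocycle (hz₂ b hb) (hz₂ w hw) hδ hstab hbw
  let P (e : E) : Prop := ∀ n : ℕ, 0 < n → z₁ ^ n • e ≠ e
  have hP₂ (e : E) (he : ¬P e) (n : ℕ) (hn : 0 < n) : z₂ ^ n • e ≠ e := by
    simp only [P, not_forall, not_not] at he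
    obtain ⟨m, hm, hme⟩ := he
    have := hstab e
    exact pow_smul_ne_of_isCyclic_stabilizer hind hm hn hme
  have hPsmul (k : G) (hk : k ∈ K) (e : E) : P (k⁻¹ • e) ↔ P e := by
    refine forall₂_congr fun n _ => not_congr ?_
    rw [smul_smul, ← ((hz₁ k hk).inv_left.pow_right n).eq, mul_smul, smul_left_cancel_iff]
  refine ⟨u₁.filter P + u₂.filter fun e => ¬P e, fun k hk => Finsupp.ext fun e => ?_⟩
  by_cases he : P e
  · rw [cocycle_apply_eq_of_commute (hz₁ k hk) hδ hu₁ he]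
    simp [hPsmul k hk, he]
  · rw [cocycle_apply_eq_of_commute (hz₂ k hk) hδ hu₂ (hP₂ e he)]
    simp [hPsmul k hk, he]

end FixedPoint

section Norm

variable {E : Type*}

/-- The `ℓ¹`-norm of an integral chain. -/
def l1Norm (f : E →₀ ℤ) : ℕ := f.sum fun _ a => a.natAbs

theorem l1Norm_smul {G : Type*} [Group G] [MulAction G E] (g : G) (f : E →₀ ℤ) :
    l1Norm (g • f) = l1Norm f :=
  Finsupp.sum_mapDomain_index_inj (MulAction.injective g)

theorem l1Norm_sub_single_lt {f : E →₀ ℤ} {e : E} (h : f e ≠ 0) :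
    l1Norm (f - Finsupp.single e (f e)) < l1Norm f := by
  classical
  have herase : f - Finsupp.single e (f e) = f.erase e :=
    sub_eq_iff_eq_add.mpr (Finsupp.erase_add_single e f).symm
  have hsum : (f e).natAbs + l1Norm (f.erase e) = l1Norm f :=
    Finsupp.add_sum_erase' f e (fun _ a => a.natAbs) fun _ => rfl
  rw [herase, ← hsum]
  exact Nat.lt_add_of_pos_left (Int.natAbs_pos.mpr h)

end Norm

/-- A `G`-tree in the guise of a connected `G`-graph with vertices `X` and oriented edges `E`,
together with a potential: the integral chain of edges leading from the root to a vertex. The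
existence of a potential forces the graph to have no cycles. -/
structure PotentialTree (G E X : Type*) [Group G] [MulAction G E] [MulAction G X] where
  source : E → X
  target : E → X
  source_smul : ∀ (g : G) e, source (g • e) = g • source e
  target_smul : ∀ (g : G) e, target (g • e) = g • target e
  root : X
  potential : X → E →₀ ℤ
  potential_root : potential root = 0
  potential_target_sub_source : ∀ e,
    potential (target e) - potential (source e) = Finsupp.single e 1
  preconnected : (SimpleGraph.fromRel fun x y => ∃ e, source e = x ∧ target e = y).Preconnected

namespace PotentialTree

variable {G E X : Type*} [Group G] [MulAction G E] [MulAction G X] (T : PotentialTree G E X)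

/-- The underlying simple graph of a tree. -/
def graph : SimpleGraph X :=
  SimpleGraph.fromRel fun x y => ∃ e, T.source e = x ∧ T.target e = y

/-- The vertex `x` is an end point of the edge `e`. -/
def Incident (e : E) (x : X) : Prop := T.source e = x ∨ T.target e = x

/-- The cocycle measuring the displacement of the root. -/
def cocycle (g : G) : E →₀ ℤ := T.potential (g • T.root)

theorem incident_smul_iff {g : G} {e : E} {x : X} :
    T.Incident (g • e) (g • x) ↔ T.Incident e x := by
  simp only [Incident, T.source_smul, T.target_smul, smul_left_cancel_iff]

theorem exists_edge_of_adj {x y : X} (h : T.graph.Adj x y) : ∃ e, ∃ s : ℤ, s ≠ 0 ∧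
    T.Incident e x ∧ (∀ z, T.Incident e z → z = x ∨ z = y) ∧
    T.potential y - T.potential x = Finsupp.single e s := by
  obtain ⟨-, ⟨e, rfl, rfl⟩ | ⟨e, rfl, rfl⟩⟩ := h
  · exact ⟨e, 1, one_ne_zero, .inl rfl, fun z hz => hz.imp Eq.symm Eq.symm,
      T.potential_target_sub_source e⟩
  · refine ⟨e, -1, by decide, .inr rfl, fun z hz => hz.symm.imp Eq.symm Eq.symm, ?_⟩
    rw [← neg_sub, T.potential_target_sub_source e, Finsupp.single_neg]

theorem potential_smul (g : G) (x : X) :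
    T.potential (g • x) = T.cocycle g + g • T.potential x := by
  let D (x : X) : E →₀ ℤ := T.potential (g • x) - g • T.potential x
  have hedge (e : E) : D (T.source e) = D (T.target e) := by
    have hdiff := T.potential_target_sub_source (g • e)
    rw [← Finsupp.comapSMul_single, ← T.potential_target_sub_source e, smul_sub,
      T.source_smul, T.target_smul] at hdiff
    rw [sub_eq_sub_iff_sub_eq_sub, ← neg_sub, hdiff, neg_sub]
  have hwalk {x y : X} (p : T.graph.Walk x y) : D x = D y := by
    induction p with
    | nil => rfl
    | cons h _ ih =>
      obtain ⟨-, ⟨e, rfl, rfl⟩ | ⟨e, rfl, rfl⟩⟩ := h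
      exacts [(hedge e).trans ih, (hedge e).symm.trans ih]
  obtain ⟨p⟩ := T.preconnected x T.root
  have hroot : D T.root = T.cocycle g := by
    simp only [D, T.potential_root, smul_zero, sub_zero, cocycle]
  exact sub_eq_iff_eq_add.mp ((hwalk p).trans hroot)

theorem isCocycle₁_cocycle : IsCocycle₁ T.cocycle := fun g h => by
  rw [cocycle, mul_smul, T.potential_smul, add_comm]
  rfl

theorem mem_support_of_potential_sub_ne_zero {x y z : X} (p : T.graph.Walk x y) {e : E}
    (hz : T.Incident e z) (he : (T.potential y - T.potential x) e ≠ 0) : z ∈ p.support := by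
  classical
  induction p with
  | nil => simp at he
  | @cons x x' y h p ih =>
    by_cases htail : (T.potential y - T.potential x') e = 0
    · obtain ⟨e', s, -, -, hends, hdiff⟩ := T.exists_edge_of_adj h
      rw [← sub_add_sub_cancel, Finsupp.add_apply, htail, zero_add, hdiff,
        Finsupp.single_apply_ne_zero] at he
      obtain rfl | rfl := hends z (he.1 ▸ hz)
      exacts [SimpleGraph.Walk.start_mem_support _, List.mem_cons_of_mem _ p.start_mem_support]
    · exact List.mem_cons_of_mem _ (ih htail)

theorem exists_first_edge {x y : X} (hxy : x ≠ y) : ∃ x' e, ∃ s : ℤ, s ≠ 0 ∧ T.Incident e x ∧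
    T.potential x' - T.potential x = Finsupp.single e s ∧
    ∀ e', T.Incident e' x → (T.potential y - T.potential x) e' = Finsupp.single e s e' := by
  obtain ⟨p, hp⟩ := (T.preconnected x y).exists_isPath
  cases p with
  | nil => exact absurd rfl hxy
  | @cons _ x' _ h p =>
    rw [SimpleGraph.Walk.cons_isPath_iff] at hp
    obtain ⟨e, s, hs, hinc, -, hdiff⟩ := T.exists_edge_of_adj h
    refine ⟨x', e, s, hs, hinc, hdiff, fun e' he' => ?_⟩
    have hzero : (T.potential y - T.potential x') e' = 0 := by
      by_contra hne
      exact hp.2 (T.mem_support_of_potential_sub_ne_zero p he' hne)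
    rw [← sub_add_sub_cancel, Finsupp.add_apply, hzero, zero_add, hdiff]

theorem exists_incident_stabilizer_inf_le {x y : X} (hxy : x ≠ y) : ∃ e, T.Incident e x ∧
    MulAction.stabilizer G x ⊓ MulAction.stabilizer G y ≤ MulAction.stabilizer G e := by
  classical
  obtain ⟨-, e, s, hs, hinc, -, hfirst⟩ := T.exists_first_edge hxy
  refine ⟨e, hinc, fun g ⟨(hx : g • x = x), (hy : g • y = y)⟩ => ?_⟩
  have hinv : g • (T.potential y - T.potential x) = T.potential y - T.potential x := by
    conv_rhs => rw [← hx, ← hy, T.potential_smul, T.potential_smul, add_sub_add_left_eq_sub]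
    rw [smul_sub]
  have hge : (T.potential y - T.potential x) (g • e) = s := by
    rw [← hinv, Finsupp.comapSMul_apply, inv_smul_smul, hfirst e hinc, Finsupp.single_eq_same]
  rw [hfirst _ (hx ▸ T.incident_smul_iff.mpr hinc), Finsupp.single_apply] at hge
  exact (by_contra fun hne => hs (by rw [← hge, if_neg (Ne.symm hne)]))

theorem finite_minimizers (u : E →₀ ℤ) :
    {x | ∀ y, l1Norm (T.potential x + u) ≤ l1Norm (T.potential y + u)}.Finite := by
  have hfin : ({T.root} ∪ (T.source '' u.support ∪ T.target '' u.support)).Finite :=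
    (Set.finite_singleton _).union
      ((u.support.finite_toSet.image _).union (u.support.finite_toSet.image _))
  refine hfin.subset fun x hx => or_iff_not_imp_left.mpr fun hroot => ?_
  obtain ⟨x', e, s, hs, hinc, hdiff, hfirst⟩ := T.exists_first_edge hroot
  have hpot : T.potential x e = -s := by
    have := hfirst e hinc
    rwa [T.potential_root, zero_sub, Finsupp.neg_apply, Finsupp.single_eq_same,
      neg_eq_iff_eq_neg] at this
  -- If `u` vanishes on `e`, stepping from `x` to `x'` along `e` decreases the norm.
  have he : e ∈ u.support := by
    rw [Finsupp.mem_support_iff]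
    intro hu
    have heval : (T.potential x + u) e = -s := by rw [Finsupp.add_apply, hpot, hu, add_zero]
    have hstep : T.potential x' + u =
        T.potential x + u - Finsupp.single e ((T.potential x + u) e) := by
      rw [heval, Finsupp.single_neg, ← hdiff]
      abel
    exact (hx x').not_gt (hstep ▸ l1Norm_sub_single_lt (heval ▸ neg_ne_zero.mpr hs))
  exact hinc.imp (fun h => ⟨e, he, h⟩) fun h => ⟨e, he, h⟩

theorem exists_forall_mem_smul_eq (T : PotentialTree G E X) {K : Subgroup G} {z₁ z₂ b w : G}
    (hb : b ∈ K) (hw : w ∈ K)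
    (hz₁ : ∀ k ∈ K, Commute k z₁) (hz₂ : ∀ k ∈ K, Commute k z₂)
    (hind : ∀ m n : ℤ, z₁ ^ m = z₂ ^ n → m = 0 ∧ n = 0)
    (hbw : ∀ m n : ℕ, 0 < m → 0 < n → ¬Commute (b ^ m) (w ^ n))
    (hstab : ∀ e : E, IsCyclic (MulAction.stabilizer G e)) : ∃ x : X, ∀ k ∈ K, k • x = x := by
  obtain ⟨u, hu⟩ :=
    exists_forall_mem_cocycle_eq hb hw hz₁ hz₂ hind hbw T.isCocycle₁_cocycle hstab
  let F (x : X) : ℕ := l1Norm (T.potential x + u)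
  have hF (k : G) (hk : k ∈ K) (x : X) : F (k • x) = F x := by
    have hpot : T.potential (k • x) + u = k • (T.potential x + u) := by
      rw [T.potential_smul, hu k hk, smul_add]
      abel
    exact (congrArg l1Norm hpot).trans (l1Norm_smul k _)
  have : Nonempty X := ⟨T.root⟩
  obtain ⟨x, hx⟩ : ∃ x, ∀ y, F x ≤ F y := ⟨Function.argmin F, fun y => Function.argmin_le F y⟩
  refine ⟨x, fun k hk => by_contra fun hne => ?_⟩
  obtain ⟨e, -, he⟩ := T.exists_incident_stabilizer_inf_le (Ne.symm hne)
  have pow_mem_stabilizer (g : G) (hg : g ∈ K) :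
      ∃ n : ℕ, 0 < n ∧ g ^ n ∈ MulAction.stabilizer G e := by
    have hmin (n : ℕ) : g ^ n • (x, k • x) ∈ {x | ∀ y, F x ≤ F y} ×ˢ {x | ∀ y, F x ≤ F y} :=
      have hgn := K.pow_mem hg n
      ⟨fun y => (hF _ hgn x).trans_le (hx y),
        fun y => ((hF _ hgn _).trans (hF k hk x)).trans_le (hx y)⟩
    obtain ⟨n, hn, hfix⟩ := exists_pow_smul_eq_of_finite
      ((T.finite_minimizers u).prod (T.finite_minimizers u)) hmin
    exact ⟨n, hn, he ⟨congrArg Prod.fst hfix, congrArg Prod.snd hfix⟩⟩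
  obtain ⟨m, hm, hbe⟩ := pow_mem_stabilizer b hb
  obtain ⟨n, hn, hwe⟩ := pow_mem_stabilizer w hw
  have := hstab e
  exact hbw m n hm hn (commute_of_mem_isCyclic hbe hwe)

end PotentialTree

section Nielsen

open FreeGroup (IsReduced invRev)

variable {α β : Type*}

theorem exists_cancellation (L₁ L₂ : List (α × Bool)) (h₁ : IsReduced L₁) (h₂ : IsReduced L₂) :
    ∃ P Q R, L₁ = P ++ Q ∧ L₂ = invRev Q ++ R ∧ IsReduced (P ++ R) := by
  induction L₁ using List.reverseRecOn generalizing L₂ with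
  | nil => exact ⟨[], [], L₂, rfl, rfl, h₂⟩
  | append_singleton P₀ a ih =>
    cases L₂ with
    | nil => exact ⟨P₀ ++ [a], [], [], by simp, rfl, by simpa using h₁⟩
    | cons b R₀ =>
      by_cases hab : a.1 = b.1 → a.2 = b.2
      · have hred : IsReduced ([a] ++ b :: R₀) := FreeGroup.isReduced_cons_cons.mpr ⟨hab, h₂⟩
        exact ⟨P₀ ++ [a], [], b :: R₀, by simp, rfl,
          by simpa using h₁.append_overlap hred (by simp)⟩
      · obtain ⟨P, Q, R, rfl, rfl, hPR⟩ :=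
          ih R₀ (List.IsChain.left_of_append h₁) (List.IsChain.right_of_append (l₁ := [b]) h₂)
        have hb : b = (a.1, !a.2) := by
          obtain ⟨hfst, hsnd⟩ := Classical.not_imp.mp hab
          exact Prod.ext hfst.symm (Bool.eq_not_of_ne (Ne.symm hsnd))
        exact ⟨P, Q ++ [a], R, by simp, by simp [invRev, hb], hPR⟩

/-- A Nielsen reduced family of words: reduced words of the same odd length `2 * q + 1`, indexed
by the letters `(a, true)` and their inverses `(a, false)`, and determined by their initial
segments of length `q + 1`. -/
structure IsNielsenFamily (q : ℕ) (w : α × Bool → List (β × Bool)) : Prop where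
  isReduced : ∀ x, IsReduced (w x)
  length_eq : ∀ x, (w x).length = 2 * q + 1
  invRev_eq : ∀ a b, invRev (w (a, b)) = w (a, !b)
  eq_of_take_eq : ∀ x y, (w x).take (q + 1) = (w y).take (q + 1) → x = y

namespace IsNielsenFamily

variable {q : ℕ} {w : α × Bool → List (β × Bool)}

theorem exists_prod_eq_mk_take_append (hw : IsNielsenFamily q w) (x : α × Bool)
    (L : List (α × Bool)) (hL : IsReduced (x :: L)) : ∃ R, IsReduced ((w x).take (q + 1) ++ R) ∧
      ((x :: L).map fun y => FreeGroup.mk (w y)).prod =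
        FreeGroup.mk ((w x).take (q + 1) ++ R) := by
  induction L generalizing x with
  | nil => exact ⟨(w x).drop (q + 1), by simpa using hw.isReduced x, by simp⟩
  | cons y L ih =>
    obtain ⟨R', hR', hprod⟩ := ih y hL.of_cons
    obtain ⟨P, Q, R, hPQ, hQR, hPR⟩ := exists_cancellation _ _ (hw.isReduced x) hR'
    have hlenx := hw.length_eq x
    have hleny := hw.length_eq y
    have hQ : Q.length ≤ q := by
      by_contra! hQ
      have hyQ : (w y).take (q + 1) = (invRev Q).take (q + 1) := by
        have := congrArg (List.take (q + 1)) hQR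
        rwa [List.take_append_of_le_length (by simp [hleny]; omega),
          List.take_append_of_le_length (by simpa using hQ), List.take_take, min_self] at this
      have hxQ : (w (x.1, !x.2)).take (q + 1) = (invRev Q).take (q + 1) := by
        rw [← hw.invRev_eq, hPQ, FreeGroup.invRev_append,
          List.take_append_of_le_length (by simpa using hQ)]
      have hyx : y = (x.1, !x.2) := hw.eq_of_take_eq _ _ (hyQ.trans hxQ.symm)
      have hred := (FreeGroup.isReduced_cons_cons.mp hL).1
      simp [hyx] at hred
    have htake : (w x).take (q + 1) ++ (P.drop (q + 1) ++ R) = P ++ R := by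
      have hP : q + 1 ≤ P.length := by
        have := congrArg List.length hPQ
        rw [List.length_append] at this
        omega
      rw [hPQ, List.take_append_of_le_length hP, ← List.append_assoc, List.take_append_drop]
    refine ⟨P.drop (q + 1) ++ R, htake ▸ hPR, ?_⟩
    rw [htake, List.map_cons, List.prod_cons, hprod, hQR, hPQ, ← FreeGroup.mul_mk,
      ← FreeGroup.mul_mk, ← FreeGroup.inv_mk, mul_assoc, mul_inv_cancel_left, FreeGroup.mul_mk]

theorem lt_length_toWord [DecidableEq β] (hw : IsNielsenFamily q w) {g : FreeGroup β}
    (hg : g ∈ Subgroup.closure (Set.range fun a => FreeGroup.mk (w (a, true)))) (hne : g ≠ 1) :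
    q < g.toWord.length := by
  classical
  rw [← FreeGroup.range_lift_eq_closure] at hg
  obtain ⟨x, rfl⟩ := hg
  have hletter (y : α × Bool) : cond y.2 (FreeGroup.mk (w (y.1, true)))
      (FreeGroup.mk (w (y.1, true)))⁻¹ = FreeGroup.mk (w y) := by
    obtain ⟨a, _ | _⟩ := y
    · rw [cond_false, FreeGroup.inv_mk, hw.invRev_eq, Bool.not_true]
    · rfl
  rw [← FreeGroup.mk_toWord (x := x), FreeGroup.lift_mk] at hne ⊢
  simp only [hletter] at hne ⊢
  have hred : IsReduced x.toWord := FreeGroup.isReduced_toWord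
  cases hx : x.toWord with
  | nil => simp [hx] at hne
  | cons y L =>
    obtain ⟨R, hR, hprod⟩ := hw.exists_prod_eq_mk_take_append y L (hx ▸ hred)
    rw [hprod, FreeGroup.toWord_mk, hR.reduce_eq, List.length_append, List.length_take,
      hw.length_eq]
    omega

end IsNielsenFamily

theorem lift_ofAdd_one_mk (L : List (α × Bool)) :
    FreeGroup.lift (fun _ => Multiplicative.ofAdd (1 : ZMod 2)) (FreeGroup.mk L) =
      Multiplicative.ofAdd (L.length : ZMod 2) := by
  have hinv : (Multiplicative.ofAdd (1 : ZMod 2))⁻¹ = Multiplicative.ofAdd 1 := by decide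
  simp [FreeGroup.lift_mk, hinv, ← ofAdd_nsmul]

end Nielsen

section Translation

open FreeGroup (IsReduced invRev)

variable (M : Type*) [Group M]

/-- The action of a group `M` on the free group with basis `M` by left translation of the basis. -/
def translation : M →* MulAut (FreeGroup M) where
  toFun c := FreeGroup.freeGroupCongr (Equiv.mulLeft c)
  map_one' := MulEquiv.toMonoidHom_injective <| FreeGroup.ext_hom _ _ fun x => by simp
  map_mul' c d := MulEquiv.toMonoidHom_injective <| FreeGroup.ext_hom _ _ fun x => by
    simp [mul_assoc]

variable {M}

@[simp]
theorem translation_of (c d : M) :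
    translation M c (FreeGroup.of d) = FreeGroup.of (c * d) := by
  simp [translation]

theorem translation_mk (c : M) (L : List (M × Bool)) :
    translation M c (FreeGroup.mk L) = FreeGroup.mk (L.map (Prod.map (c * ·) id)) := by
  rfl

theorem isNielsenFamily_translates {q : ℕ} {L : List (M × Bool)} (hL : IsReduced L)
    (hlen : L.length = 2 * q + 1) :
    IsNielsenFamily q fun x : M × Bool =>
      cond x.2 (L.map (Prod.map (x.1 * ·) id)) (invRev (L.map (Prod.map (x.1 * ·) id))) := by
  classical
  have hred (c : M) : IsReduced (L.map (Prod.map (c * ·) id)) := by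
    refine (List.isChain_map _).mpr ?_
    simpa [FreeGroup.IsReduced] using hL
  refine ⟨?_, ?_, ?_, ?_⟩
  · rintro ⟨c, _ | _⟩
    · exact FreeGroup.isReduced_iff_reduce_eq.mpr
        (by rw [cond_false, FreeGroup.reduce_invRev, (hred c).reduce_eq])
    · exact hred c
  · rintro ⟨c, _ | _⟩ <;> simp [hlen]
  · rintro c (_ | _) <;> simp
  -- The middle letter of a translate of `L` or of its inverse determines that translate.
  · have hq : q < L.length := by omega
    have hmid (x : M × Bool) : (cond x.2 (L.map (Prod.map (x.1 * ·) id))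
        (invRev (L.map (Prod.map (x.1 * ·) id))))[q]? =
          some (x.1 * L[q].1, cond x.2 L[q].2 (!L[q].2)) := by
      have hsymm : L.length - 1 - q = q := by omega
      obtain ⟨c, _ | _⟩ := x <;> simp [invRev, hq, hsymm, Prod.map]
    intro x y hxy
    have := congrArg (·[q]?) hxy
    simp only [List.getElem?_take, Nat.lt_succ_self, if_true, hmid, Option.some.injEq,
      Prod.mk.injEq, mul_left_inj] at this
    obtain ⟨hfst, hsnd⟩ := this
    refine Prod.ext hfst ?_
    cases hx : x.2 <;> cases hy : y.2 <;> simp_all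

theorem odd_length_toWord_of_mem_closure [DecidableEq M] {y : FreeGroup M}
    (h : FreeGroup.of 1 ∈ Subgroup.closure (Set.range fun c => translation M c y)) :
    Odd y.toWord.length := by
  by_contra hodd
  let parity : FreeGroup M →* Multiplicative (ZMod 2) :=
    FreeGroup.lift fun _ => Multiplicative.ofAdd 1
  have hle : Subgroup.closure (Set.range fun c => translation M c y) ≤ parity.ker := by
    rw [Subgroup.closure_le]
    rintro _ ⟨c, rfl⟩
    rw [Nat.not_odd_iff_even, ← ZMod.natCast_eq_zero_iff_even] at hodd
    change parity (translation M c y) = 1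
    rw [← FreeGroup.mk_toWord (x := y), translation_mk, lift_ofAdd_one_mk, List.length_map, hodd,
      ofAdd_zero]
  have hone : parity (FreeGroup.of 1) = 1 := hle h
  rw [FreeGroup.lift_apply_of] at hone
  exact absurd hone (by decide)

theorem exists_eq_of_or_eq_of_inv {y : FreeGroup M}
    (h : FreeGroup.of 1 ∈ Subgroup.closure (Set.range fun c => translation M c y)) :
    ∃ c : M, y = FreeGroup.of c ∨ y = (FreeGroup.of c)⁻¹ := by
  classical
  obtain ⟨q, hq⟩ := odd_length_toWord_of_mem_closure h
  have hq0 : q = 0 := by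
    have hlt := (isNielsenFamily_translates FreeGroup.isReduced_toWord hq).lt_length_toWord
      (g := FreeGroup.of 1) (by simpa [← translation_mk, FreeGroup.mk_toWord] using h)
      (FreeGroup.of_ne_one 1)
    simpa using hlt
  obtain ⟨⟨c, b⟩, hc⟩ := List.length_eq_one_iff.mp (hq.trans (by rw [hq0, mul_zero, zero_add]))
  refine ⟨c, ?_⟩
  rw [← FreeGroup.mk_toWord (x := y), hc]
  cases b
  · exact Or.inr rfl
  · exact Or.inl rfl

open SemidirectProduct in
theorem exists_eq_inr_mul_inl_mul_inr {s : FreeGroup M ⋊[translation M] M}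
    (h : inl (FreeGroup.of 1) ∈ (inr : M →* FreeGroup M ⋊[translation M] M).range ⊔
      Subgroup.zpowers s) :
    ∃ m m' : M, s = inr m * inl (FreeGroup.of 1) * inr m' ∨
      s = inr m * (inl (FreeGroup.of 1))⁻¹ * inr m' := by
  let N := Subgroup.closure (Set.range fun c => translation M c s.left)
  have hN (c : M) {x : FreeGroup M} (hx : x ∈ N) : translation M c x ∈ N := by
    have hle : N ≤ N.comap (translation M c).toMonoidHom := by
      refine (Subgroup.closure_le _).mpr ?_
      rintro _ ⟨d, rfl⟩
      exact Subgroup.subset_closure ⟨c * d, by simp⟩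
    exact hle hx
  let Q : Subgroup (FreeGroup M ⋊[translation M] M) :=
    { carrier := {x | x.left ∈ N}
      mul_mem' := fun ha hb => N.mul_mem ha (hN _ hb)
      one_mem' := N.one_mem
      inv_mem' := fun ha => hN _ (N.inv_mem ha) }
  have hQ : (inr : M →* FreeGroup M ⋊[translation M] M).range ⊔ Subgroup.zpowers s ≤ Q := by
    refine sup_le ?_ ((Subgroup.zpowers_le).mpr (Subgroup.subset_closure ⟨1, by simp⟩))
    rintro _ ⟨m, rfl⟩
    exact N.one_mem
  obtain ⟨c, hc⟩ := exists_eq_of_or_eq_of_inv (hQ h : FreeGroup.of 1 ∈ N)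
  have hof : (inl (FreeGroup.of c) : FreeGroup M ⋊[translation M] M) =
      inr c * inl (FreeGroup.of 1) * inr c⁻¹ := by
    rw [← inl_aut, translation_of, mul_one]
  refine ⟨c, c⁻¹ * s.right, hc.imp (fun hc => ?_) fun hc => ?_⟩ <;>
    · rw [← inl_left_mul_inr_right s, hc]
      simp [hof, mul_assoc]

end Translation

namespace RAAG

section Endomorphism

open SemidirectProduct (inl inr)

variable {V : Type*} {Γ : SimpleGraph V} {t : V} {Y Z : Set V}

open Classical in
/-- If no vertex of `Y` is adjacent to `t`, then `Y` and `t` generate the free product of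
`special Γ Y` with an infinite cyclic group; that free product is encoded as the semidirect product
of the free group on the conjugates of `gen Γ t` by `special Γ Y`. All other generators are sent
to `1`. -/
noncomputable def toSemidirect (hY : ∀ v ∈ Y, ¬Γ.Adj t v) :
    RAAG Γ →* FreeGroup (special Γ Y) ⋊[translation (special Γ Y)] special Γ Y :=
  lift (fun v => if v = t then inl (FreeGroup.of 1) else
      if hv : v ∈ Y then inr ⟨gen Γ v, gen_mem_special hv⟩ else 1) fun v w hvw => by
    split_ifs <;> subst_vars
    all_goals first
      | exact Commute.one_left _
      | exact Commute.one_right _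
      | exact Commute.refl _
      | exact absurd hvw (hY _ ‹_›)
      | exact absurd hvw.symm (hY _ ‹_›)
      | exact Commute.map (Subtype.ext (commute_gen hvw).eq) _

theorem toSemidirect_gen_self (hY : ∀ v ∈ Y, ¬Γ.Adj t v) :
    toSemidirect hY (gen Γ t) = inl (FreeGroup.of 1) := by
  simp [toSemidirect]

theorem toSemidirect_gen_of_mem (hY : ∀ v ∈ Y, ¬Γ.Adj t v) (ht : t ∉ Y) {v : V} (hv : v ∈ Y) :
    toSemidirect hY (gen Γ v) = inr ⟨gen Γ v, gen_mem_special hv⟩ := by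
  simp [toSemidirect, hv, ne_of_mem_of_not_mem hv ht]

theorem toSemidirect_gen_of_notMem (hY : ∀ v ∈ Y, ¬Γ.Adj t v) {v : V} (hvt : v ≠ t)
    (hv : v ∉ Y) : toSemidirect hY (gen Γ v) = 1 := by
  simp [toSemidirect, hv, hvt]

/-- The evaluation of the semidirect product of `toSemidirect` in the right-angled Artin group. -/
def ofSemidirect (t : V) (Y : Set V) :
    FreeGroup (special Γ Y) ⋊[translation (special Γ Y)] special Γ Y →* RAAG Γ :=
  SemidirectProduct.lift (FreeGroup.lift fun m => (m : RAAG Γ) * gen Γ t * (m : RAAG Γ)⁻¹)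
    (special Γ Y).subtype fun m => FreeGroup.ext_hom _ _ fun x => by simp [mul_assoc]

@[simp]
theorem ofSemidirect_inl_of_one : ofSemidirect t Y (inl (FreeGroup.of 1)) = gen Γ t := by
  simp [ofSemidirect]

@[simp]
theorem ofSemidirect_inr (m : special Γ Y) : ofSemidirect t Y (inr m) = m := by
  simp [ofSemidirect]

theorem exists_eq_ofSemidirect_mul (hY : ∀ v ∈ Y, ¬Γ.Adj t v) (ht : t ∉ Y)
    (hZ : ∀ z ∈ Z, ∀ v ∈ insert t (Y ∪ Z), Commute (gen Γ z) (gen Γ v)) {x : RAAG Γ}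
    (hx : x ∈ special Γ (insert t (Y ∪ Z))) :
    ∃ z ∈ special Γ Z, x = ofSemidirect t Y (toSemidirect hY x) * z := by
  have hcomm {z x : RAAG Γ} (hz : z ∈ special Γ Z) (hx : x ∈ special Γ (insert t (Y ∪ Z))) :
      Commute z x := commute_of_mem_special hZ hz hx
  have hle : special Γ Z ≤ special Γ (insert t (Y ∪ Z)) := special_mono (by grind)
  induction hx using Subgroup.closure_induction with
  | mem x hx =>
    obtain ⟨v, hv, rfl⟩ := hx
    by_cases hvt : v = t
    · exact ⟨1, one_mem _, by rw [hvt, toSemidirect_gen_self, ofSemidirect_inl_of_one, mul_one]⟩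
    · by_cases hvY : v ∈ Y
      · exact ⟨1, one_mem _,
          by rw [toSemidirect_gen_of_mem hY ht hvY, ofSemidirect_inr, mul_one]⟩
      · exact ⟨gen Γ v, gen_mem_special (by grind),
          by rw [toSemidirect_gen_of_notMem hY hvt hvY, map_one, one_mul]⟩
  | one => exact ⟨1, one_mem _, by simp⟩
  | mul x y _ hy ihx ihy =>
    obtain ⟨z, hz, hzx⟩ := ihx
    obtain ⟨z', hz', hzy⟩ := ihy
    refine ⟨z * z', mul_mem hz hz', ?_⟩
    have hc : Commute z (ofSemidirect t Y (toSemidirect hY y)) := by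
      rw [eq_mul_inv_of_mul_eq hzy.symm]
      exact hcomm hz (mul_mem hy (inv_mem (hle hz')))
    nth_rw 1 [hzx, hzy]
    rw [map_mul, map_mul, mul_assoc, ← mul_assoc z, hc.eq]
    simp only [mul_assoc]
  | inv x hx ih =>
    obtain ⟨z, hz, hzx⟩ := ih
    refine ⟨z⁻¹, inv_mem hz, ?_⟩
    have hzx' := eq_mul_inv_of_mul_eq hzx.symm
    rw [map_inv, map_inv, hzx', mul_inv_rev, inv_inv, (hcomm hz (inv_mem hx)).eq,
      mul_inv_cancel_right]

theorem exists_eq_mul_gen_mul_of_mem_map (hY : ∀ v ∈ Y, ¬Γ.Adj t v) (ht : t ∉ Y)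
    (hZ : ∀ z ∈ Z, ∀ v ∈ insert t (Y ∪ Z), Commute (gen Γ z) (gen Γ v))
    {θ : RAAG Γ →* RAAG Γ} (hθ : ∀ v ∈ Y ∪ Z, θ (gen Γ v) = gen Γ v)
    (hmem : θ (gen Γ t) ∈ special Γ (insert t (Y ∪ Z)))
    (hmap : gen Γ t ∈ (special Γ (insert t (Y ∪ Z))).map θ) :
    ∃ g ∈ special Γ Y, ∃ g' ∈ special Γ Y, ∃ z ∈ special Γ Z,
      θ (gen Γ t) = g * gen Γ t * g' * z ∨ θ (gen Γ t) = g * (gen Γ t)⁻¹ * g' * z := by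
  set s := toSemidirect hY (θ (gen Γ t)) with hs
  have hle : special Γ (insert t (Y ∪ Z)) ≤
      ((inr : special Γ Y →* FreeGroup (special Γ Y) ⋊[translation _] special Γ Y).range ⊔
        Subgroup.zpowers s).comap ((toSemidirect hY).comp θ) := by
    refine special_le.mpr fun v hv => ?_
    rw [Subgroup.mem_comap, MonoidHom.comp_apply]
    by_cases hvt : v = t
    · rw [hvt]
      exact Subgroup.mem_sup_right (Subgroup.mem_zpowers s)
    · rw [hθ v (by grind)]
      by_cases hvY : v ∈ Y
      · rw [toSemidirect_gen_of_mem hY ht hvY]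
        exact Subgroup.mem_sup_left ⟨_, rfl⟩
      · rw [toSemidirect_gen_of_notMem hY hvt hvY]
        exact one_mem _
  obtain ⟨x, hx, hxt⟩ := hmap
  have hinl := hle hx
  rw [Subgroup.mem_comap, MonoidHom.comp_apply, hxt, toSemidirect_gen_self] at hinl
  obtain ⟨m, m', hm⟩ := exists_eq_inr_mul_inl_mul_inr hinl
  obtain ⟨z, hz, hzt⟩ := exists_eq_ofSemidirect_mul hY ht hZ hmem
  refine ⟨m, m.2, m', m'.2, z, hz, hm.imp (fun hm => ?_) fun hm => ?_⟩ <;>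
    rw [hzt, ← hs, hm] <;> simp

end Endomorphism

end RAAG

section Corona

variable {V : Type*}

/-- The corona of a graph: a copy `Sum.inl v` of every vertex `v`, with a leaf `Sum.inr v` attached
to it. -/
def corona (Λ : SimpleGraph V) : SimpleGraph (V ⊕ V) where
  Adj
    | .inl v, .inl w => Λ.Adj v w
    | .inl v, .inr w => v = w
    | .inr v, .inl w => v = w
    | .inr _, .inr _ => False
  symm := by
    constructor
    rintro (v | v) (w | w) h
    exacts [h.symm, Eq.symm h, Eq.symm h, h]
  loopless := ⟨by rintro (v | v) h; exacts [h.ne rfl, h]⟩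

namespace RAAG

variable (Λ : SimpleGraph V)

/-- The inclusion of the right-angled Artin group of a graph in that of its corona. -/
def core : RAAG Λ →* RAAG (corona Λ) :=
  lift (fun v => gen (corona Λ) (.inl v)) fun _ _ h => commute_gen h

/-- The generator of a leaf of the corona. -/
def leaf (v : V) : RAAG (corona Λ) := gen (corona Λ) (.inr v)

/-- The retraction of `core` that kills the leaves. -/
def coreRetraction : RAAG (corona Λ) →* RAAG Λ :=
  lift (Sum.elim (gen Λ) fun _ => 1) <| by
    rintro (v | v) (w | w) h
    exacts [commute_gen h, Commute.one_right _, Commute.one_left _, Commute.one_left _]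

variable {Λ}

@[simp]
theorem core_gen (v : V) : core Λ (gen Λ v) = gen (corona Λ) (.inl v) := lift_gen _ _ _

@[simp]
theorem coreRetraction_core (x : RAAG Λ) : coreRetraction Λ (core Λ x) = x := by
  have hid : (coreRetraction Λ).comp (core Λ) = MonoidHom.id _ :=
    hom_ext fun v => by simp [coreRetraction]
  exact DFunLike.congr_fun hid x

theorem core_injective : Function.Injective (core Λ) :=
  Function.LeftInverse.injective coreRetraction_core

theorem commute_core_gen_leaf (v : V) : Commute (core Λ (gen Λ v)) (leaf Λ v) := by
  rw [core_gen]
  exact commute_gen (Γ := corona Λ) (v := .inl v) (w := .inr v) rfl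

theorem corona_hom_ext {G : Type*} [Group G] {f g : RAAG (corona Λ) →* G}
    (hcore : ∀ x, f (core Λ x) = g (core Λ x)) (hleaf : ∀ v, f (leaf Λ v) = g (leaf Λ v)) :
    f = g := by
  refine hom_ext ?_
  rintro (v | v)
  · rw [← core_gen, hcore]
  · exact hleaf v

theorem map_core_special (S : Set V) :
    (special Λ S).map (core Λ) = special (corona Λ) (Sum.inl '' S) := by
  rw [map_special, special, Set.image_image]
  simp only [core_gen]

theorem range_core : (core Λ).range = special (corona Λ) (Set.range Sum.inl) := by
  rw [MonoidHom.range_eq_map, ← special_univ, map_core_special, Set.image_univ]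

theorem leaf_notMem_range_core (v : V) : leaf Λ v ∉ (core Λ).range := by
  rw [range_core]
  intro h
  have hone := expSum_eq_one (Γ := corona Λ) (v := .inr v) (by simp) h
  rw [leaf, expSum_gen] at hone
  exact absurd hone (by decide)

end RAAG

end Corona

section BassSerre

open scoped Pointwise

theorem conj_smul_zpowers {G : Type*} [Group G] (g x : G) :
    MulAut.conj g • Subgroup.zpowers x = Subgroup.zpowers (g * x * g⁻¹) :=
  MonoidHom.map_zpowers (MulAut.conj g).toMonoidHom x

theorem map_conj_of_commGroup {G A : Type*} [Group G] [CommGroup A] (f : G →* A) (g x : G) :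
    f (g * x * g⁻¹) = f x := by
  rw [map_mul, map_mul, map_inv, mul_inv_cancel_comm]

theorem stabilizer_mk_eq_conj_smul {G : Type*} [Group G] (H : Subgroup G) (g : G) :
    MulAction.stabilizer G (g : G ⧸ H) = MulAut.conj g • H := by
  have hg : (g : G ⧸ H) = g • ((1 : G) : G ⧸ H) := by
    rw [MulAction.Quotient.smul_coe, smul_eq_mul, mul_one]
  rw [hg, MulAction.stabilizer_smul_eq_stabilizer_map_conj, MulAction.stabilizer_quotient]
  rfl

namespace RAAG

variable {V : Type*} (Λ : SimpleGraph V)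

/-- The vertices of the Bass–Serre tree of the decomposition of `RAAG (corona Λ)` as an iterated
HNN extension of the core, with one stable letter for every leaf. -/
abbrev CoronaVertex : Type _ := RAAG (corona Λ) ⧸ (core Λ).range

/-- The edges of the Bass–Serre tree with vertices `CoronaVertex Λ`. -/
abbrev CoronaEdge : Type _ := Σ v, RAAG (corona Λ) ⧸ Subgroup.zpowers (core Λ (gen Λ v))

variable {Λ}

/-- The edge `g⟨v⟩` starts at `g` times the core. -/
def coronaSource (e : CoronaEdge Λ) : CoronaVertex Λ :=
  Subgroup.quotientMapOfLE (Subgroup.zpowers_le.mpr ⟨gen Λ e.1, rfl⟩) e.2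

/-- The edge `g⟨v⟩` ends at `g * leaf Λ v` times the core. -/
def coronaTarget (e : CoronaEdge Λ) : CoronaVertex Λ :=
  Quotient.map' (s₂ := QuotientGroup.leftRel (core Λ).range) (· * leaf Λ e.1) (fun g h hgh => by
    rw [QuotientGroup.leftRel_apply] at hgh ⊢
    obtain ⟨n, hn⟩ := hgh
    refine ⟨gen Λ e.1 ^ n, ?_⟩
    calc core Λ (gen Λ e.1 ^ n) = (leaf Λ e.1)⁻¹ * (core Λ (gen Λ e.1) ^ n * leaf Λ e.1) := by
          rw [((commute_core_gen_leaf e.1).zpow_left n).eq, inv_mul_cancel_left, map_zpow]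
      _ = (leaf Λ e.1)⁻¹ * (g⁻¹ * h * leaf Λ e.1) := by rw [← hn]
      _ = (g * leaf Λ e.1)⁻¹ * (h * leaf Λ e.1) := by group) e.2

theorem coronaSource_smul (g : RAAG (corona Λ)) (e : CoronaEdge Λ) :
    coronaSource (g • e) = g • coronaSource e := by
  obtain ⟨v, ⟨x⟩⟩ := e
  rfl

theorem coronaTarget_smul (g : RAAG (corona Λ)) (e : CoronaEdge Λ) :
    coronaTarget (g • e) = g • coronaTarget e := by
  obtain ⟨v, ⟨x⟩⟩ := e
  exact congrArg (QuotientGroup.mk (s := (core Λ).range)) (mul_assoc g x (leaf Λ v))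

theorem stabilizer_coronaEdge (v : V) (g : RAAG (corona Λ)) :
    MulAction.stabilizer (RAAG (corona Λ)) (⟨v, (g : _ ⧸ _)⟩ : CoronaEdge Λ) =
      Subgroup.zpowers (g * core Λ (gen Λ v) * g⁻¹) := by
  rw [← conj_smul_zpowers, ← stabilizer_mk_eq_conj_smul]
  ext h
  simp [MulAction.mem_stabilizer_iff, Sigma.smul_mk]

theorem preconnected_corona : (SimpleGraph.fromRel fun x y : CoronaVertex Λ =>
    ∃ e, coronaSource e = x ∧ coronaTarget e = y).Preconnected := by
  set T := SimpleGraph.fromRel fun x y : CoronaVertex Λ =>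
    ∃ e, coronaSource e = x ∧ coronaTarget e = y
  let o : CoronaVertex Λ := ((1 : RAAG (corona Λ)) : _ ⧸ _)
  have hsmul (g : RAAG (corona Λ)) {x y : CoronaVertex Λ} (h : T.Reachable x y) :
      T.Reachable (g • x) (g • y) := by
    refine h.map ⟨(g • ·), fun hxy => ?_⟩
    refine ⟨fun h => hxy.1 (smul_left_cancel g h), hxy.2.imp ?_ ?_⟩ <;>
      · rintro ⟨e, rfl, rfl⟩
        exact ⟨g • e, coronaSource_smul g e, coronaTarget_smul g e⟩
  let H : Subgroup (RAAG (corona Λ)) :=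
    { carrier := {g | T.Reachable o (g • o)}
      one_mem' := by simp [o]
      mul_mem' := fun {g h} hg hh => by simpa [mul_smul] using hg.trans (hsmul g hh)
      inv_mem' := fun {g} hg => by simpa using (hsmul g⁻¹ hg).symm }
  have hfix {g : RAAG (corona Λ)} (hg : o = g • o) : g ∈ H := by
    change T.Reachable o (g • o)
    rw [← hg]
  have hH : special (corona Λ) Set.univ ≤ H := by
    refine special_le.mpr ?_
    rintro (v | v) -
    · refine hfix (Eq.symm ?_)
      rw [← MulAction.mem_stabilizer_iff, MulAction.stabilizer_quotient]
      exact ⟨gen Λ v, core_gen v⟩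
    · by_cases hv : o = gen (corona Λ) (.inr v) • o
      · exact hfix hv
      · refine SimpleGraph.Adj.reachable ⟨hv, .inl ⟨⟨v, ((1 : RAAG (corona Λ)) : _ ⧸ _)⟩, rfl, ?_⟩⟩
        exact congrArg (QuotientGroup.mk (s := (core Λ).range))
          ((one_mul _).trans (mul_one _).symm)
  have hroot (g : RAAG (corona Λ)) : T.Reachable o g := by
    have := hH (special_univ (Γ := corona Λ) ▸ Subgroup.mem_top g)
    rwa [← mul_one g]
  rintro ⟨x⟩ ⟨y⟩
  exact (hroot x).symm.trans (hroot y)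

theorem exists_potential_corona : ∃ p : CoronaVertex Λ → CoronaEdge Λ →₀ ℤ,
    p ((1 : RAAG (corona Λ)) : _ ⧸ _) = 0 ∧
      ∀ e, p (coronaTarget e) - p (coronaSource e) = Finsupp.single e 1 := by
  let e (v : V) : CoronaEdge Λ := ⟨v, ((1 : RAAG (corona Λ)) : _ ⧸ _)⟩
  have hfix (v : V) : gen (corona Λ) (.inl v) • e v = e v := by
    rw [← MulAction.mem_stabilizer_iff, stabilizer_coronaEdge]
    simp
  obtain ⟨δ, hδ, hδgen⟩ := exists_isCocycle₁ (Γ := corona Λ)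
    (Sum.elim (fun _ => 0) fun v => Finsupp.single (e v) (1 : ℤ)) <| by
      rintro (v | v) (w | w) (h : _)
      · simp
      · obtain rfl : v = w := h
        simp [hfix]
      · obtain rfl : v = w := h
        simp [hfix]
      · exact h.elim
  have hcore {g : RAAG (corona Λ)} (hg : g ∈ (core Λ).range) : δ g = 0 := by
    rw [range_core] at hg
    refine isCocycle₁_eq_zero_of_mem_closure hδ ?_ hg
    rintro _ ⟨_, ⟨v, rfl⟩, rfl⟩
    exact hδgen (.inl v)
  refine ⟨fun x => Quotient.liftOn' x δ fun g h hgh => ?_, ?_, ?_⟩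
  · rw [QuotientGroup.leftRel_apply] at hgh
    rw [← mul_inv_cancel_left g h, hδ, hcore hgh, smul_zero, zero_add]
  · exact hcore (one_mem _)
  · rintro ⟨v, ⟨g⟩⟩
    have hge : g • e v = ⟨v, (g : _ ⧸ _)⟩ :=
      congrArg (Sigma.mk v) (congrArg QuotientGroup.mk (mul_one g))
    change δ (g * leaf Λ v) - δ g = Finsupp.single ⟨v, (g : _ ⧸ _)⟩ 1
    rw [hδ, leaf, hδgen, add_sub_cancel_right, Sum.elim_inr, Finsupp.comapSMul_single, hge]

theorem exists_coronaTree : ∃ T : PotentialTree (RAAG (corona Λ)) (CoronaEdge Λ) (CoronaVertex Λ),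
    T.source = coronaSource ∧ T.target = coronaTarget := by
  obtain ⟨p, hroot, hedge⟩ := exists_potential_corona (Λ := Λ)
  exact ⟨⟨coronaSource, coronaTarget, coronaSource_smul, coronaTarget_smul, _, p, hroot, hedge,
    preconnected_corona⟩, rfl, rfl⟩

theorem exists_range_core_inf_conj_smul_le {y : RAAG (corona Λ)} (hy : y ∉ (core Λ).range) :
    ∃ v k, (core Λ).range ⊓ MulAut.conj y • (core Λ).range ≤
      Subgroup.zpowers (core Λ (k * gen Λ v * k⁻¹)) := by
  obtain ⟨T, hsource, htarget⟩ := exists_coronaTree (Λ := Λ)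
  have hne : ((1 : RAAG (corona Λ)) : CoronaVertex Λ) ≠ y := by
    rw [Ne, QuotientGroup.eq, inv_one, one_mul]
    exact hy
  obtain ⟨⟨v, ⟨x⟩⟩, hinc, hle⟩ := T.exists_incident_stabilizer_inf_le hne
  rw [stabilizer_mk_eq_conj_smul, stabilizer_mk_eq_conj_smul, map_one, one_smul] at hle
  rw [PotentialTree.Incident, hsource, htarget] at hinc
  suffices h : ∃ k, core Λ (k * gen Λ v * k⁻¹) = x * core Λ (gen Λ v) * x⁻¹ by
    obtain ⟨k, hk⟩ := h
    refine ⟨v, k, hle.trans_eq ?_⟩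
    rw [hk]
    exact stabilizer_coronaEdge v x
  rcases hinc with hx | hx
  · obtain ⟨k, hk⟩ : 1⁻¹ * x ∈ (core Λ).range := QuotientGroup.eq.mp hx.symm
    exact ⟨k, by simp only [map_mul, map_inv, hk, inv_one, one_mul]⟩
  · obtain ⟨k, hk⟩ : 1⁻¹ * (x * leaf Λ v) ∈ (core Λ).range := QuotientGroup.eq.mp hx.symm
    refine ⟨k, ?_⟩
    rw [map_mul, map_mul, map_inv, hk, inv_one, one_mul, mul_assoc x,
      ← (commute_core_gen_leaf v).eq]
    group

theorem mem_zpowers_of_conj_leaf_mem {v : V} {x : RAAG Λ}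
    (hx : (leaf Λ v)⁻¹ * core Λ x * leaf Λ v ∈ (core Λ).range) :
    x ∈ Subgroup.zpowers (gen Λ v) := by
  obtain ⟨w, k, hle⟩ := exists_range_core_inf_conj_smul_le (leaf_notMem_range_core v)
  have hmem {y : RAAG Λ} (hy : (leaf Λ v)⁻¹ * core Λ y * leaf Λ v ∈ (core Λ).range) :
      ∃ n : ℤ, k * gen Λ w ^ n * k⁻¹ = y := by
    have hconj : core Λ y ∈ MulAut.conj (leaf Λ v) • (core Λ).range := by
      rwa [Subgroup.mem_pointwise_smul_iff_inv_smul_mem, MulAut.smul_def, MulAut.conj_inv_apply]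
    obtain ⟨n, hn⟩ := hle ⟨⟨y, rfl⟩, hconj⟩
    exact ⟨n, core_injective (by simpa only [← map_zpow, conj_zpow] using hn)⟩
  obtain ⟨m, hm⟩ := hmem (y := gen Λ v) ⟨gen Λ v, by
    rw [mul_assoc, (commute_core_gen_leaf v).eq, inv_mul_cancel_left]⟩
  obtain ⟨n, rfl⟩ := hmem hx
  have hexp := congrArg (expSum Λ v) hm
  rw [map_conj_of_commGroup, expSum_gen] at hexp
  obtain rfl : w = v := by
    by_contra hwv
    rw [map_zpow, expSum_gen_of_ne hwv, one_zpow, eq_comm, ofAdd_eq_one] at hexp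
    exact one_ne_zero hexp
  rw [expSum_gen_zpow] at hexp
  obtain rfl : m = 1 := Multiplicative.ofAdd.injective hexp
  rw [zpow_one] at hm
  rw [← conj_zpow, hm]
  exact zpow_mem (Subgroup.mem_zpowers _) n

end RAAG

end BassSerre

section NearClique

open scoped Pointwise

variable {V : Type*}

/-- A graph all of whose missing edges contain the vertex `t`, which has at least one non-neighbour
and at least two neighbours. -/
structure IsNearClique (Λ : SimpleGraph V) (t : V) : Prop where
  isClique_compl : Λ.IsClique {t}ᶜ
  exists_not_adj : ∃ b, b ≠ t ∧ ¬Λ.Adj b t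
  nontrivial_neighborSet : (Λ.neighborSet t).Nontrivial

namespace IsNearClique

open RAAG

variable {Λ : SimpleGraph V} {t : V}

theorem commute_gen_of_adj (hΛ : IsNearClique Λ t) {z : V} (hz : Λ.Adj t z) (x : RAAG Λ) :
    Commute (gen Λ z) x := by
  refine commute_gen_of_mem_special (S := Set.univ) (fun v _ => ?_)
    (special_univ (Γ := Λ) ▸ Subgroup.mem_top x)
  by_cases hvt : v = t
  · exact .inr (hvt ▸ hz.symm)
  · by_cases hvz : v = z
    exacts [.inl hvz, .inr (hΛ.isClique_compl hz.ne' hvt (Ne.symm hvz))]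

theorem commute_of_mem_special_compl (hΛ : IsNearClique Λ t) {x y : RAAG Λ}
    (hx : x ∈ special Λ {t}ᶜ) (hy : y ∈ special Λ {t}ᶜ) : Commute x y := by
  refine commute_of_mem_special (fun v hv w hw => ?_) hx hy
  by_cases hvw : v = w
  · exact hvw ▸ Commute.refl _
  · exact commute_gen (hΛ.isClique_compl hv hw hvw)

theorem exists_range_le_conj_smul_range_core (hΛ : IsNearClique Λ t)
    {f : RAAG Λ →* RAAG (corona Λ)} (hf : Function.Injective f) :
    ∃ y : RAAG (corona Λ), f.range ≤ MulAut.conj y • (core Λ).range := by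
  obtain ⟨T, -⟩ := exists_coronaTree (Λ := Λ)
  obtain ⟨b, hbt, hb⟩ := hΛ.exists_not_adj
  obtain ⟨z₁, hz₁, z₂, hz₂, hz⟩ := hΛ.nontrivial_neighborSet
  have hcentral {z : V} (hz : z ∈ Λ.neighborSet t) : ∀ k ∈ f.range, Commute k (f (gen Λ z)) := by
    rintro _ ⟨x, rfl⟩
    exact (hΛ.commute_gen_of_adj hz x).symm.map f
  obtain ⟨⟨y⟩, hy⟩ := T.exists_forall_mem_smul_eq (K := f.range) (b := f (gen Λ b))
    (w := f (gen Λ t)) ⟨_, rfl⟩ ⟨_, rfl⟩ (hcentral hz₁) (hcentral hz₂)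
    (fun m n h => eq_zero_of_gen_zpow_eq hz (hf (by simpa only [map_zpow] using h)))
    (fun m n hm hn h => not_commute_gen_pow hbt hb hm hn (hf (by simpa using h.eq)))
    (by
      rintro ⟨v, ⟨g⟩⟩
      exact (stabilizer_coronaEdge v g).symm ▸ inferInstance)
  refine ⟨y, fun k hk => ?_⟩
  rw [← stabilizer_mk_eq_conj_smul]
  exact hy k hk

theorem mem_range_core_of_range_le_conj_smul (hΛ : IsNearClique Λ t) {y : RAAG (corona Λ)}
    (hy : (core Λ).range ≤ MulAut.conj y • (core Λ).range) : y ∈ (core Λ).range := by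
  by_contra hmem
  obtain ⟨v, k, hle⟩ := exists_range_core_inf_conj_smul_le hmem
  rw [inf_eq_left.mpr hy] at hle
  obtain ⟨b, hbt, hb⟩ := hΛ.exists_not_adj
  obtain ⟨m, hm⟩ := hle ⟨gen Λ b, rfl⟩
  obtain ⟨n, hn⟩ := hle ⟨gen Λ t, rfl⟩
  refine not_commute_gen_pow hbt hb one_pos one_pos (core_injective ?_)
  simp only [pow_one, map_mul, ← hm, ← hn]
  exact zpow_mul_comm _ m n

theorem exists_conj_mul_smul_range_core_eq (hΛ : IsNearClique Λ t)
    (φ : MulAut (RAAG (corona Λ))) :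
    ∃ g : RAAG (corona Λ), (MulAut.conj g * φ) • (core Λ).range = (core Λ).range := by
  have hexists (ψ : MulAut (RAAG (corona Λ))) :
      ∃ y : RAAG (corona Λ), ψ • (core Λ).range ≤ MulAut.conj y • (core Λ).range := by
    obtain ⟨y, hy⟩ := hΛ.exists_range_le_conj_smul_range_core (f := ψ.toMonoidHom.comp (core Λ))
      (ψ.injective.comp core_injective)
    exact ⟨y, (MonoidHom.map_range ψ.toMonoidHom (core Λ)).trans_le hy⟩
  obtain ⟨y, hy⟩ := hexists φ
  have hle : (MulAut.conj y⁻¹ * φ) • (core Λ).range ≤ (core Λ).range := by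
    rwa [mul_smul, Subgroup.pointwise_smul_subset_iff, ← map_inv, inv_inv]
  obtain ⟨y', hy'⟩ := hexists (MulAut.conj y⁻¹ * φ)⁻¹
  have hmem : y' ∈ (core Λ).range := hΛ.mem_range_core_of_range_le_conj_smul
    ((Subgroup.pointwise_smul_subset_iff.mp hle).trans hy')
  rw [Subgroup.conj_smul_eq_self_of_mem hmem, Subgroup.pointwise_smul_subset_iff, inv_inv] at hy'
  exact ⟨y⁻¹, hle.antisymm hy'⟩

end IsNearClique

end NearClique

section Level

/-- The congruence subgroup of level `n`: the automorphisms acting trivially on the homomorphisms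
to `ℤ/n`. -/
def levelSubgroup (G : Type*) [Group G] (n : ℕ) : Subgroup (MulAut G) where
  carrier := {φ | ∀ (χ : G →* Multiplicative (ZMod n)) (x : G), χ (φ x) = χ x}
  one_mem' _ _ := rfl
  mul_mem' hφ hψ χ x := (hφ χ _).trans (hψ χ x)
  inv_mem' {φ} hφ χ x := by rw [← hφ χ (φ⁻¹ x), MulAut.apply_inv_self]

theorem conj_mem_levelSubgroup {G : Type*} [Group G] (n : ℕ) (g : G) :
    MulAut.conj g ∈ levelSubgroup G n := fun χ x => map_conj_of_commGroup χ g x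

theorem finiteIndex_levelSubgroup (G : Type*) [Group G] (n : ℕ)
    [Finite (G →* Multiplicative (ZMod n))] : (levelSubgroup G n).FiniteIndex := by
  let ρ : MulAut G →* Equiv.Perm (G →* Multiplicative (ZMod n)) :=
    MonoidHom.toHomPerm
      { toFun := fun φ χ => χ.comp φ⁻¹.toMonoidHom
        map_one' := rfl
        map_mul' := fun φ ψ => funext fun χ => MonoidHom.ext fun x =>
          congrArg (fun σ : MulAut G => χ (σ x)) (mul_inv_rev φ ψ) }
  refine Subgroup.finiteIndex_of_le (H := ρ.ker) fun φ hφ χ x => ?_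
  have hχ : χ.comp φ⁻¹.toMonoidHom = χ := congrArg (· χ) (MonoidHom.mem_ker.mp hφ)
  have hx : χ (φ⁻¹ (φ x)) = χ (φ x) := DFunLike.congr_fun hχ (φ x)
  rw [← hx, MulAut.inv_apply_self]

namespace RAAG

variable {V : Type*} {Γ : SimpleGraph V}

instance finite_hom [Finite V] {A : Type*} [Group A] [Finite A] : Finite (RAAG Γ →* A) :=
  Finite.of_injective (fun f v => f (gen Γ v)) fun _ _ h => hom_ext (congrFun h)

theorem expSum_modEq_of_mem_levelSubgroup {n : ℕ} {θ : MulAut (RAAG Γ)}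
    (hθ : θ ∈ levelSubgroup (RAAG Γ) n) (v : V) (x : RAAG Γ) :
    (expSum Γ v (θ x)).toAdd ≡ (expSum Γ v x).toAdd [ZMOD n] := by
  let ε : RAAG Γ →* Multiplicative (ZMod n) :=
    (AddMonoidHom.toMultiplicative (Int.castAddHom (ZMod n))).comp (expSum Γ v)
  exact (ZMod.intCast_eq_intCast_iff _ _ n).mp (Multiplicative.ofAdd.injective (hθ ε x))

theorem eq_of_map_gen_eq_conj_of_mem_levelSubgroup {θ : MulAut (RAAG Γ)}
    (hθ : θ ∈ levelSubgroup (RAAG Γ) 3) {v w : V} {k : RAAG Γ} {n : ℤ}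
    (h : θ (gen Γ v) = k * gen Γ w ^ n * k⁻¹) : w = v ∧ n = 1 := by
  have hmod := expSum_modEq_of_mem_levelSubgroup hθ v (gen Γ v)
  rw [h, map_conj_of_commGroup, expSum_gen] at hmod
  obtain rfl : w = v := by
    by_contra hwv
    rw [map_zpow, expSum_gen_of_ne hwv, one_zpow] at hmod
    exact absurd hmod (by decide)
  rw [expSum_gen_zpow] at hmod
  have hroot : gen Γ w = θ⁻¹ (k * gen Γ w * k⁻¹) ^ n := by
    rw [← map_zpow, conj_zpow, ← h, MulAut.inv_apply_self]
  have hdvd : n ∣ 1 := by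
    have hexp := congrArg (expSum Γ w) hroot
    rw [expSum_gen, map_zpow] at hexp
    exact ⟨_, Multiplicative.ofAdd.injective hexp⟩
  rcases Int.isUnit_iff.mp (isUnit_of_dvd_one hdvd) with rfl | rfl
  · exact ⟨rfl, rfl⟩
  · exact absurd hmod (by decide)

theorem map_gen_ne_mul_inv_mul_of_mem_levelSubgroup {θ : MulAut (RAAG Γ)}
    (hθ : θ ∈ levelSubgroup (RAAG Γ) 3) {t : V} {Y Z : Set V} (htY : t ∉ Y) (htZ : t ∉ Z)
    {g g' z : RAAG Γ} (hg : g ∈ special Γ Y) (hg' : g' ∈ special Γ Y) (hz : z ∈ special Γ Z) :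
    θ (gen Γ t) ≠ g * (gen Γ t)⁻¹ * g' * z := fun h => by
  have hmod := expSum_modEq_of_mem_levelSubgroup hθ t (gen Γ t)
  rw [h] at hmod
  simp only [map_mul (expSum Γ t), map_inv (expSum Γ t), expSum_eq_one htY hg,
    expSum_eq_one htY hg', expSum_eq_one htZ hz, expSum_gen] at hmod
  exact absurd hmod (by decide)

end RAAG

end Level

section Normalization

open scoped Pointwise

namespace RAAG

variable {V : Type*} {Λ : SimpleGraph V}

theorem exists_mulAut_core_apply_eq {ψ : MulAut (RAAG (corona Λ))}
    (hψ : ψ • (core Λ).range = (core Λ).range) :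
    ∃ θ : MulAut (RAAG Λ), ∀ x, ψ (core Λ x) = core Λ (θ x) := by
  let restrict (σ : MulAut (RAAG (corona Λ))) : RAAG Λ →* RAAG Λ :=
    (coreRetraction Λ).comp (σ.toMonoidHom.comp (core Λ))
  have hrestrict {σ : MulAut (RAAG (corona Λ))} (hσ : σ • (core Λ).range = (core Λ).range)
      (x : RAAG Λ) : core Λ (restrict σ x) = σ (core Λ x) := by
    obtain ⟨y, hy⟩ : σ (core Λ x) ∈ (core Λ).range :=
      hσ ▸ Subgroup.smul_mem_pointwise_smul _ σ _ ⟨x, rfl⟩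
    change core Λ (coreRetraction Λ (σ (core Λ x))) = _
    rw [← hy, coreRetraction_core]
  have hψ' : ψ⁻¹ • (core Λ).range = (core Λ).range := inv_smul_eq_iff.mpr hψ.symm
  refine ⟨MonoidHom.toMulEquiv (restrict ψ) (restrict ψ⁻¹) (MonoidHom.ext fun x => ?_)
    (MonoidHom.ext fun x => ?_), fun x => (hrestrict hψ x).symm⟩
  all_goals refine core_injective ?_
  · exact (hrestrict hψ' _).trans (by rw [hrestrict hψ]; exact ψ.symm_apply_apply _)
  · exact (hrestrict hψ _).trans (by rw [hrestrict hψ']; exact ψ.apply_symm_apply _)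

theorem exists_map_gen_eq_conj {ψ : MulAut (RAAG (corona Λ))} {θ : MulAut (RAAG Λ)}
    (hlevel : ψ ∈ levelSubgroup (RAAG (corona Λ)) 3)
    (hψ : ψ • (core Λ).range = (core Λ).range) (hθ : ∀ x, ψ (core Λ x) = core Λ (θ x)) (v : V) :
    ∃ k, θ (gen Λ v) = k * gen Λ v * k⁻¹ := by
  have hleaf : ψ (leaf Λ v) ∉ (core Λ).range := by
    rw [← hψ]
    exact fun h => leaf_notMem_range_core v (Subgroup.smul_mem_pointwise_smul_iff.mp h)
  have hθlevel : θ ∈ levelSubgroup (RAAG Λ) 3 := fun χ x => by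
    simpa [hθ] using hlevel (χ.comp (coreRetraction Λ)) (core Λ x)
  have hconj : core Λ (θ (gen Λ v)) ∈ MulAut.conj (ψ (leaf Λ v)) • (core Λ).range := by
    rw [Subgroup.mem_pointwise_smul_iff_inv_smul_mem, MulAut.smul_def, MulAut.conj_inv_apply,
      ← hθ, mul_assoc, ← map_mul, (commute_core_gen_leaf v).eq, map_mul, inv_mul_cancel_left, hθ]
    exact ⟨_, rfl⟩
  obtain ⟨w, k, hle⟩ := exists_range_core_inf_conj_smul_le hleaf
  obtain ⟨n, hn⟩ := hle ⟨⟨_, rfl⟩, hconj⟩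
  have heq : θ (gen Λ v) = k * gen Λ w ^ n * k⁻¹ :=
    core_injective (by simpa only [← map_zpow, conj_zpow] using hn.symm)
  obtain ⟨rfl, rfl⟩ := eq_of_map_gen_eq_conj_of_mem_levelSubgroup hθlevel heq
  exact ⟨k, by rw [heq, zpow_one]⟩

theorem eq_inv_of_conj_eq_mul {t : V} {Y Z : Set V} (htY : t ∉ Y) (htZ : t ∉ Z)
    (hYZ : Disjoint Y Z) {k g g' z : RAAG Λ} (hg : g ∈ special Λ Y) (hg' : g' ∈ special Λ Y)
    (hz : z ∈ special Λ Z) (h : k * gen Λ t * k⁻¹ = g * gen Λ t * g' * z) :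
    g' = g⁻¹ ∧ z = 1 := by
  have hZ := congrArg (retraction Λ Z) h
  have hY := congrArg (retraction Λ Y) h
  simp only [map_mul, map_inv, retraction_gen_of_notMem htZ, retraction_eq_one hYZ.symm hg,
    retraction_eq_one hYZ.symm hg', retraction_eq_self subset_rfl hz, mul_one, one_mul,
    mul_inv_cancel] at hZ
  simp only [map_mul, map_inv, retraction_gen_of_notMem htY, retraction_eq_one hYZ hz,
    retraction_eq_self subset_rfl hg, retraction_eq_self subset_rfl hg', mul_one,
    mul_inv_cancel] at hY
  exact ⟨eq_inv_of_mul_eq_one_right hY.symm, hZ.symm⟩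

end RAAG

namespace IsNearClique

open RAAG

variable {V : Type*} {Λ : SimpleGraph V} {t : V}

theorem map_gen_eq_of_map_gen_eq (hΛ : IsNearClique Λ t) {θ : RAAG Λ →* RAAG Λ}
    (hconj : ∀ v, ∃ k, θ (gen Λ v) = k * gen Λ v * k⁻¹) {b : V} (hbt : b ≠ t)
    (hadj : ¬Λ.Adj b t) (hb : θ (gen Λ b) = gen Λ b) {v : V} (hv : v ≠ t) :
    θ (gen Λ v) = gen Λ v := by
  have hcomm : Commute (gen Λ b) (θ (gen Λ v)) := by
    rw [← hb]
    exact (hΛ.commute_of_mem_special_compl (gen_mem_special hbt) (gen_mem_special hv)).map θ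
  obtain ⟨n, c, hc, hnc⟩ := exists_eq_gen_zpow_mul_of_commute hcomm
  have hmem : θ (gen Λ v) ∈ special Λ {t}ᶜ := by
    rw [hnc]
    refine mul_mem (zpow_mem (gen_mem_special hbt) n) (special_mono ?_ hc)
    rintro _ hu rfl
    exact hadj hu
  obtain ⟨k, hk⟩ := hconj v
  calc θ (gen Λ v) = retraction Λ {t}ᶜ (k * gen Λ v * k⁻¹) := by
        rw [← hk, retraction_eq_self subset_rfl hmem]
    _ = retraction Λ {t}ᶜ k * gen Λ v * (retraction Λ {t}ᶜ k)⁻¹ := by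
        rw [map_mul, map_mul, map_inv, retraction_gen_of_mem hv]
    _ = gen Λ v := by
        rw [(hΛ.commute_of_mem_special_compl (retraction_mem_special _ k)
          (gen_mem_special hv)).eq, mul_inv_cancel_right]

theorem exists_map_gen_eq_conj_of_forall_ne (hΛ : IsNearClique Λ t) {θ : RAAG Λ →* RAAG Λ}
    (hsurj : Function.Surjective θ) (hfix : ∀ v ≠ t, θ (gen Λ v) = gen Λ v)
    (hconj : ∃ k, θ (gen Λ t) = k * gen Λ t * k⁻¹) :
    ∃ g ∈ special Λ {t}ᶜ, θ (gen Λ t) = g * gen Λ t * g⁻¹ := by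
  let Y : Set V := {v | v ≠ t ∧ ¬Λ.Adj t v}
  let Z : Set V := Λ.neighborSet t
  have hYZ : insert t (Y ∪ Z) = Set.univ := by
    ext v
    simp only [Y, Z, Set.mem_insert_iff, Set.mem_union, Set.mem_ofPred_eq, Set.mem_univ,
      iff_true, SimpleGraph.mem_neighborSet]
    tauto
  have hYt : Y ⊆ {t}ᶜ := fun v hv => hv.1
  have hdisj : Disjoint Y Z := Set.disjoint_left.mpr fun v hv hz => hv.2 hz
  obtain ⟨g, hg, g', hg', z, hz, hθt⟩ := exists_eq_mul_gen_mul_of_mem_map (Γ := Λ) (t := t)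
    (Y := Y) (Z := Z) (fun v hv => hv.2) (fun h => h.1 rfl)
    (fun z hz v _ => hΛ.commute_gen_of_adj hz _)
    (fun v hv => hfix v (hv.elim (fun h => h.1) fun h => SimpleGraph.Adj.ne' h))
    (by rw [hYZ, special_univ]; exact Subgroup.mem_top _)
    (by rw [hYZ, special_univ, Subgroup.map_top_of_surjective θ hsurj]; exact Subgroup.mem_top _)
  obtain ⟨k, hk⟩ := hconj
  rw [hk] at hθt ⊢
  have htZ : t ∉ Z := Λ.irrefl
  rcases hθt with hpos | hneg
  · obtain ⟨rfl, rfl⟩ := eq_inv_of_conj_eq_mul (fun h => h.1 rfl) htZ hdisj hg hg' hz hpos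
    exact ⟨g, special_mono hYt hg, by rw [hpos, mul_one]⟩
  · exact (map_gen_ne_mul_inv_mul_of_mem_levelSubgroup (conj_mem_levelSubgroup 3 k)
      (fun h => h.1 rfl) htZ hg hg' hz hneg).elim

theorem eq_conj_of_forall_gen (hΛ : IsNearClique Λ t) {θ : MulAut (RAAG Λ)}
    (hconj : ∀ v, ∃ k, θ (gen Λ v) = k * gen Λ v * k⁻¹) : ∃ g, θ = MulAut.conj g := by
  obtain ⟨b, hbt, hb⟩ := hΛ.exists_not_adj
  obtain ⟨l, hl⟩ := hconj b
  set σ : MulAut (RAAG Λ) := MulAut.conj l⁻¹ * θ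
  have hσ (v : V) : σ (gen Λ v) = l⁻¹ * θ (gen Λ v) * l := by simp [σ]
  have hσconj (v : V) : ∃ k, σ (gen Λ v) = k * gen Λ v * k⁻¹ := by
    obtain ⟨k, hk⟩ := hconj v
    exact ⟨l⁻¹ * k, by rw [hσ, hk]; group⟩
  have hσfix (v : V) (hv : v ≠ t) : σ (gen Λ v) = gen Λ v :=
    hΛ.map_gen_eq_of_map_gen_eq (θ := σ.toMonoidHom) hσconj hbt hb (by
      change σ (gen Λ b) = _
      rw [hσ, hl]
      group) hv
  obtain ⟨g, hg, hgt⟩ := hΛ.exists_map_gen_eq_conj_of_forall_ne (θ := σ.toMonoidHom)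
    σ.surjective hσfix (hσconj t)
  have hσg : σ = MulAut.conj g := by
    refine MulEquiv.toMonoidHom_injective (hom_ext fun v => ?_)
    by_cases hv : v = t
    · exact hv ▸ hgt
    · change σ (gen Λ v) = g * gen Λ v * g⁻¹
      rw [hσfix v hv, (hΛ.commute_of_mem_special_compl hg (gen_mem_special hv)).eq,
        mul_inv_cancel_right]
  refine ⟨l * g, ?_⟩
  rw [map_mul, ← hσg]
  simp [σ]

theorem exists_conj_mul_core_eq (hΛ : IsNearClique Λ t) {φ : MulAut (RAAG (corona Λ))}
    (hφ : φ ∈ levelSubgroup (RAAG (corona Λ)) 3) :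
    ∃ g : RAAG (corona Λ), ∀ x, (MulAut.conj g * φ) (core Λ x) = core Λ x := by
  obtain ⟨g, hg⟩ := hΛ.exists_conj_mul_smul_range_core_eq φ
  obtain ⟨θ, hθ⟩ := exists_mulAut_core_apply_eq hg
  obtain ⟨k, rfl⟩ := hΛ.eq_conj_of_forall_gen
    (exists_map_gen_eq_conj (mul_mem (conj_mem_levelSubgroup 3 g) hφ) hg hθ)
  refine ⟨core Λ k⁻¹ * g, fun x => ?_⟩
  rw [map_mul, mul_assoc, MulAut.mul_apply, hθ, MulAut.conj_apply, MulAut.conj_apply, ← map_inv,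
    ← map_mul, ← map_mul]
  congr 1
  group

end IsNearClique

end Normalization

section LeafShift

namespace RAAG

variable {V : Type*} {Λ : SimpleGraph V}

theorem map_leaf_mem_special {ψ : MulAut (RAAG (corona Λ))}
    (hψ : ∀ x, ψ (core Λ x) = core Λ x) (v : V) :
    ψ (leaf Λ v) ∈
      special (corona Λ) (insert (.inr v) (Sum.inl '' Λ.neighborSet v ∪ {Sum.inl v})) := by
  have hcomm : Commute (gen (corona Λ) (.inl v)) (ψ (leaf Λ v)) := by
    rw [← core_gen, ← hψ]
    exact (commute_core_gen_leaf v).map ψ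
  obtain ⟨n, c, hc, hnc⟩ := exists_eq_gen_zpow_mul_of_commute hcomm
  rw [hnc]
  refine mul_mem (zpow_mem (gen_mem_special (.inr (.inr rfl))) n) (special_mono ?_ hc)
  rintro (u | u) (hu : _)
  · exact .inr (.inl ⟨u, hu, rfl⟩)
  · exact .inl (congrArg Sum.inr (Eq.symm hu))

theorem exists_map_leaf_eq {ψ : MulAut (RAAG (corona Λ))}
    (hlevel : ψ ∈ levelSubgroup (RAAG (corona Λ)) 3) (hψ : ∀ x, ψ (core Λ x) = core Λ x) (v : V) :
    ∃ l ∈ special Λ (Λ.neighborSet v), ∃ r ∈ special Λ (insert v (Λ.neighborSet v)),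
      ψ (leaf Λ v) = core Λ l * leaf Λ v * core Λ r := by
  have hψ' (x : RAAG Λ) : ψ⁻¹ (core Λ x) = core Λ x := by
    conv_lhs => rw [← hψ x]
    exact MulAut.inv_apply_self _ _ _
  have hadj (u : V ⊕ V) (hu : u ∈ insert (.inr v) (Sum.inl '' Λ.neighborSet v ∪ {Sum.inl v})) :
      Commute (gen (corona Λ) (.inl v)) (gen (corona Λ) u) := by
    rcases hu with rfl | ⟨w, hw, rfl⟩ | rfl
    exacts [commute_gen (Γ := corona Λ) (v := .inl v) (w := .inr v) rfl,
      commute_gen (Γ := corona Λ) (v := .inl v) (w := .inl w) hw, Commute.refl _]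
  have hY : Sum.inr v ∉ Sum.inl '' Λ.neighborSet v := by simp
  have hZ : Sum.inr v ∉ ({Sum.inl v} : Set (V ⊕ V)) := by simp
  obtain ⟨g, hg, g', hg', z, hz, hleaf⟩ := exists_eq_mul_gen_mul_of_mem_map (Γ := corona Λ)
    (t := .inr v) (Y := Sum.inl '' Λ.neighborSet v) (Z := {Sum.inl v}) (θ := ψ.toMonoidHom)
    (by rintro _ ⟨w, hw, rfl⟩ (rfl : v = w); exact Λ.irrefl hw) hY
    (by rintro _ rfl; exact hadj)
    (by rintro _ (⟨w, -, rfl⟩ | rfl) <;> rw [← core_gen] <;> exact hψ _)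
    (map_leaf_mem_special hψ v)
    ⟨ψ⁻¹ (leaf Λ v), map_leaf_mem_special hψ' v, MulAut.apply_inv_self _ _ _⟩
  replace hleaf := hleaf.resolve_right
    (map_gen_ne_mul_inv_mul_of_mem_levelSubgroup hlevel hY hZ hg hg' hz)
  rw [← Set.image_singleton] at hz
  rw [← map_core_special] at hg hg' hz
  obtain ⟨l, hl, rfl⟩ := hg
  obtain ⟨r, hr, rfl⟩ := hg'
  obtain ⟨s, hs, rfl⟩ := hz
  refine ⟨l, hl, r * s, mul_mem (special_mono (Set.subset_insert _ _) hr)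
    (special_mono (by simp) hs), ?_⟩
  rw [map_mul, ← mul_assoc]
  exact hleaf

variable (Λ) in
/-- The families of pairs of elements, indexed by the vertices of `Λ`, that centralize the
corresponding generator. -/
def vertexCentralizers : Subgroup (V × Bool → RAAG Λ) :=
  Subgroup.pi Set.univ fun j => Subgroup.centralizer {gen Λ j.1}

/-- The endomorphism of `RAAG (corona Λ)` that fixes the core and multiplies the leaf of `v` on the
left by the inverse of `f (v, false)` and on the right by `f (v, true)`. -/
def leafShiftHom (f : vertexCentralizers Λ) : RAAG (corona Λ) →* RAAG (corona Λ) :=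
  lift (Sum.elim (fun v => gen (corona Λ) (.inl v)) fun v =>
      (core Λ (f.1 (v, false)))⁻¹ * leaf Λ v * core Λ (f.1 (v, true))) <| by
    have hcomm (v : V) : Commute (gen (corona Λ) (.inl v))
        ((core Λ (f.1 (v, false)))⁻¹ * leaf Λ v * core Λ (f.1 (v, true))) := by
      have hf (b : Bool) : Commute (core Λ (gen Λ v)) (core Λ (f.1 (v, b))) :=
        (Commute.map (Subgroup.mem_centralizer_singleton_iff.mp (f.2 (v, b) trivial)) (core Λ)).symm
      rw [← core_gen]
      exact ((hf false).inv_right.mul_right (commute_core_gen_leaf v)).mul_right (hf true)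
    rintro (v | v) (w | w) (h : _)
    · exact commute_gen h
    · obtain rfl : v = w := h
      exact hcomm v
    · obtain rfl : v = w := h
      exact (hcomm v).symm
    · exact h.elim

theorem leafShiftHom_core (f : vertexCentralizers Λ) (x : RAAG Λ) :
    leafShiftHom f (core Λ x) = core Λ x := by
  have hcomp : (leafShiftHom f).comp (core Λ) = core Λ :=
    hom_ext fun v => by simp [leafShiftHom]
  exact DFunLike.congr_fun hcomp x

theorem leafShiftHom_leaf (f : vertexCentralizers Λ) (v : V) :
    leafShiftHom f (leaf Λ v) = (core Λ (f.1 (v, false)))⁻¹ * leaf Λ v * core Λ (f.1 (v, true)) :=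
  lift_gen _ _ _

theorem leafShiftHom_one : leafShiftHom (1 : vertexCentralizers Λ) = MonoidHom.id _ :=
  corona_hom_ext (leafShiftHom_core 1) fun v => by simp [leafShiftHom_leaf]

theorem leafShiftHom_mul (f g : vertexCentralizers Λ) :
    leafShiftHom (f * g) = (leafShiftHom f).comp (leafShiftHom g) :=
  corona_hom_ext (fun x => by simp [leafShiftHom_core]) fun v => by
    simp [leafShiftHom_leaf, leafShiftHom_core, mul_assoc]

variable (Λ) in
/-- The automorphisms of `RAAG (corona Λ)` given by `leafShiftHom`. -/
def leafShift : vertexCentralizers Λ →* MulAut (RAAG (corona Λ)) where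
  toFun f := MonoidHom.toMulEquiv (leafShiftHom f) (leafShiftHom f⁻¹)
    (by rw [← leafShiftHom_mul, inv_mul_cancel, leafShiftHom_one])
    (by rw [← leafShiftHom_mul, mul_inv_cancel, leafShiftHom_one])
  map_one' := MulEquiv.toMonoidHom_injective leafShiftHom_one
  map_mul' f g := MulEquiv.toMonoidHom_injective (leafShiftHom_mul f g)

theorem leafShift_core (f : vertexCentralizers Λ) (x : RAAG Λ) :
    leafShift Λ f (core Λ x) = core Λ x :=
  leafShiftHom_core f x

theorem leafShift_leaf (f : vertexCentralizers Λ) (v : V) :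
    leafShift Λ f (leaf Λ v) =
      (core Λ (f.1 (v, false)))⁻¹ * leaf Λ v * core Λ (f.1 (v, true)) :=
  leafShiftHom_leaf f v

theorem eq_leafShift {ψ : MulAut (RAAG (corona Λ))} {f : vertexCentralizers Λ}
    (hcore : ∀ x, ψ (core Λ x) = core Λ x)
    (hleaf : ∀ v, ψ (leaf Λ v) = (core Λ (f.1 (v, false)))⁻¹ * leaf Λ v * core Λ (f.1 (v, true))) :
    ψ = leafShift Λ f :=
  MulEquiv.toMonoidHom_injective <| corona_hom_ext
    (fun x => (hcore x).trans (leafShift_core f x).symm)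
    fun v => (hleaf v).trans (leafShift_leaf f v).symm

end RAAG

end LeafShift

section ShiftFamilies

open scoped Pointwise

variable {V : Type*} {Λ : SimpleGraph V} {t : V}

namespace RAAG

variable (Λ t) in
/-- The vertices allowed in the right (`true`) and left (`false`) multiplier of the leaf of `v`.
Conjugation by a power of `gen Λ v` does not move that leaf, so `v` is allowed on one side only, and
inner automorphisms are used up by allowing nothing on the left of the leaf of `t`. -/
def shiftSupport : V × Bool → Set V
  | (v, true) => insert v (Λ.neighborSet v)
  | (v, false) => {u | v ≠ t ∧ Λ.Adj v u}

theorem shiftSupport_subset (j : V × Bool) :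
    shiftSupport Λ t j ⊆ insert j.1 (Λ.neighborSet j.1) := by
  obtain ⟨v, _ | _⟩ := j
  exacts [fun _ hu => .inr hu.2, subset_rfl]

variable (Λ t) in
/-- The families of multipliers whose leaf shifts represent a finite-index subgroup of the outer
automorphism group, each element once. -/
def shiftFamilies : Subgroup (V × Bool → RAAG Λ) :=
  Subgroup.pi Set.univ fun j => special Λ (shiftSupport Λ t j)

theorem shiftFamilies_le : shiftFamilies Λ t ≤ vertexCentralizers Λ := fun _ hf j hj =>
  Subgroup.mem_centralizer_singleton_iff.mpr
    (commute_gen_of_mem_special (shiftSupport_subset j) (hf j hj)).symm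

theorem eq_one_of_mem_zpowers_gen {v : V} {x : RAAG Λ} (hx : x ∈ Subgroup.zpowers (gen Λ v))
    (hexp : expSum Λ v x = 1) : x = 1 := by
  obtain ⟨n, rfl⟩ := hx
  rw [expSum_gen_zpow, ofAdd_eq_one] at hexp
  exact hexp ▸ zpow_zero _

theorem mul_mem_zpowers_of_leafShift_leaf_eq_conj {f : vertexCentralizers Λ} {k : RAAG Λ}
    (v : V) (hf : leafShift Λ f (leaf Λ v) = core Λ k * leaf Λ v * (core Λ k)⁻¹) :
    f.1 (v, false) * k ∈ Subgroup.zpowers (gen Λ v) := by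
  refine mem_zpowers_of_conj_leaf_mem ⟨f.1 (v, true) * k, ?_⟩
  have hleaf := (leafShift_leaf f v).symm.trans hf
  calc core Λ (f.1 (v, true) * k)
      = (leaf Λ v)⁻¹ * core Λ (f.1 (v, false)) *
          ((core Λ (f.1 (v, false)))⁻¹ * leaf Λ v * core Λ (f.1 (v, true))) * core Λ k := by
        rw [map_mul]
        group
    _ = (leaf Λ v)⁻¹ * core Λ (f.1 (v, false) * k) * leaf Λ v := by
        rw [hleaf, map_mul]
        group

theorem eq_one_of_leafShift_eq_one {f : vertexCentralizers Λ} (hf : leafShift Λ f = 1)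
    (hexp : ∀ v, expSum Λ v (f.1 (v, false)) = 1) : f = 1 := by
  have hleft (v : V) : f.1 (v, false) = 1 := by
    refine eq_one_of_mem_zpowers_gen ?_ (hexp v)
    simpa using mul_mem_zpowers_of_leafShift_leaf_eq_conj (f := f) (k := 1) v (by simp [hf])
  have hright (v : V) : f.1 (v, true) = 1 := by
    have hleaf := leafShift_leaf f v
    rw [hf, hleft, map_one, inv_one, one_mul, MulAut.one_apply, left_eq_mul] at hleaf
    exact core_injective (hleaf.trans (map_one _).symm)
  refine Subtype.ext (funext ?_)
  rintro ⟨v, _ | _⟩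
  exacts [hleft v, hright v]

end RAAG

namespace IsNearClique

open RAAG

theorem exists_conj_mul_leaf_eq (hΛ : IsNearClique Λ t) {φ : MulAut (RAAG (corona Λ))}
    (hφ : φ ∈ levelSubgroup (RAAG (corona Λ)) 3) :
    ∃ g : RAAG (corona Λ), (∀ x, (MulAut.conj g * φ) (core Λ x) = core Λ x) ∧
      ∃ r ∈ special Λ (insert t (Λ.neighborSet t)),
        (MulAut.conj g * φ) (leaf Λ t) = leaf Λ t * core Λ r := by
  obtain ⟨g, hg⟩ := hΛ.exists_conj_mul_core_eq hφ
  obtain ⟨l, hl, r, hr, hleaf⟩ :=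
    exists_map_leaf_eq (mul_mem (conj_mem_levelSubgroup 3 g) hφ) hg t
  have hcentral (x : RAAG Λ) : Commute l x :=
    commute_of_mem_special (T := Set.univ)
      (fun z hz w _ => hΛ.commute_gen_of_adj hz (gen Λ w)) hl
      (special_univ (Γ := Λ) ▸ Subgroup.mem_top x)
  refine ⟨core Λ l⁻¹ * g, fun x => ?_, r * l,
    mul_mem hr (special_mono (Set.subset_insert _ _) hl), ?_⟩
  · rw [map_mul, mul_assoc, MulAut.mul_apply, hg, MulAut.conj_apply,
      ((hcentral x).inv_left.map (core Λ)).eq, mul_inv_cancel_right]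
  · rw [map_mul, mul_assoc, MulAut.mul_apply, hleaf, MulAut.conj_apply]
    simp only [map_inv, map_mul]
    group

theorem exists_conj_mul_eq_leafShift (hΛ : IsNearClique Λ t) {φ : MulAut (RAAG (corona Λ))}
    (hφ : φ ∈ levelSubgroup (RAAG (corona Λ)) 3) :
    ∃ g : RAAG (corona Λ), ∃ f : shiftFamilies Λ t,
      MulAut.conj g * φ = leafShift Λ (Subgroup.inclusion shiftFamilies_le f) := by
  obtain ⟨g, hg, s, hs, hleaf⟩ := hΛ.exists_conj_mul_leaf_eq hφ
  have hshift (v : V) : ∃ l ∈ special Λ (shiftSupport Λ t (v, false)),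
      ∃ r ∈ special Λ (shiftSupport Λ t (v, true)),
        (MulAut.conj g * φ) (leaf Λ v) = (core Λ l)⁻¹ * leaf Λ v * core Λ r := by
    by_cases hv : v = t
    · subst hv
      exact ⟨1, one_mem _, s, hs, by rw [hleaf, map_one, inv_one, one_mul]⟩
    · obtain ⟨l, hl, r, hr, hlr⟩ :=
        exists_map_leaf_eq (mul_mem (conj_mem_levelSubgroup 3 g) hφ) hg v
      have hsub : Λ.neighborSet v ⊆ shiftSupport Λ t (v, false) := fun _ hu => ⟨hv, hu⟩
      exact ⟨l⁻¹, inv_mem (special_mono hsub hl), r, hr,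
        by rw [hlr, map_inv, inv_inv]⟩
  choose l hl r hr hlr using hshift
  refine ⟨g, ⟨fun j => cond j.2 (r j.1) (l j.1), ?_⟩, eq_leafShift hg hlr⟩
  rintro ⟨v, _ | _⟩ -
  exacts [hl v, hr v]

theorem exists_eq_core_of_forall_commute (hΛ : IsNearClique Λ t) {g : RAAG (corona Λ)}
    (hg : ∀ x, Commute g (core Λ x)) : ∃ k, core Λ k = g ∧ ∀ x, Commute k x := by
  obtain ⟨k, rfl⟩ : g ∈ (core Λ).range := by
    refine hΛ.mem_range_core_of_range_le_conj_smul ?_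
    rintro _ ⟨x, rfl⟩
    rw [Subgroup.mem_pointwise_smul_iff_inv_smul_mem, ← map_inv, MulAut.smul_def,
      MulAut.conj_apply, ((hg x).inv_left).eq, mul_inv_cancel_right]
    exact ⟨x, rfl⟩
  exact ⟨k, rfl, fun x => core_injective (by simpa only [map_mul] using (hg x).eq)⟩

theorem expSum_eq_one_of_forall_commute (hΛ : IsNearClique Λ t) {k : RAAG Λ}
    (hk : ∀ x, Commute k x) : expSum Λ t k = 1 := by
  obtain ⟨b, hbt, hb⟩ := hΛ.exists_not_adj
  obtain ⟨n, c, hc, rfl⟩ := exists_eq_gen_zpow_mul_of_commute (hk (gen Λ b)).symm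
  rw [map_mul, map_zpow, expSum_gen_of_ne hbt, one_zpow, one_mul, expSum_eq_one hb hc]

theorem eq_one_of_leafShift_eq_conj (hΛ : IsNearClique Λ t) {f : shiftFamilies Λ t}
    {g : RAAG (corona Λ)}
    (hf : leafShift Λ (Subgroup.inclusion shiftFamilies_le f) = MulAut.conj g) : f = 1 := by
  have hmem (v : V) : f.1 (v, false) ∈ special Λ (shiftSupport Λ t (v, false)) :=
    f.2 (v, false) trivial
  have hcomm (x : RAAG Λ) : Commute g (core Λ x) := by
    rw [commute_iff_eq, ← mul_inv_eq_iff_eq_mul, ← MulAut.conj_apply, ← hf, leafShift_core]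
  obtain ⟨k, rfl, hk⟩ := hΛ.exists_eq_core_of_forall_commute hcomm
  have hft : f.1 (t, false) = 1 := by
    have hempty : shiftSupport Λ t (t, false) = ∅ :=
      Set.eq_empty_of_forall_notMem fun _ hu => hu.1 rfl
    simpa [hempty, special] using hmem t
  have hkt : k = 1 := by
    refine eq_one_of_mem_zpowers_gen (v := t) ?_ (hΛ.expSum_eq_one_of_forall_commute hk)
    have hzpow := mul_mem_zpowers_of_leafShift_leaf_eq_conj (k := k) t (DFunLike.congr_fun hf _)
    exact one_mul k ▸ hft ▸ hzpow
  rw [hkt, map_one, map_one] at hf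
  have hone := eq_one_of_leafShift_eq_one hf fun v =>
    expSum_eq_one (fun hv => Λ.irrefl hv.2) (hmem v)
  exact Subgroup.inclusion_injective shiftFamilies_le (hone.trans (map_one _).symm)

end IsNearClique

end ShiftFamilies

section JoinGraph

variable {J : Type*} {W : J → Type*} {Γ : ∀ j, SimpleGraph (W j)}

variable (Γ) in
/-- The join of a family of graphs: vertices from different members are always adjacent. -/
def joinGraph : SimpleGraph (Σ j, W j) where
  Adj x y := ∀ h : x.1 = y.1, (Γ y.1).Adj (h ▸ x.2) y.2
  symm := by
    constructor
    rintro ⟨j, u⟩ ⟨k, w⟩ h (rfl : k = j)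
    exact (h rfl).symm
  loopless := ⟨fun _ h => (Γ _).irrefl (h rfl)⟩

theorem joinGraph_adj_mk {j : J} {u w : W j} :
    (joinGraph Γ).Adj ⟨j, u⟩ ⟨j, w⟩ ↔ (Γ j).Adj u w :=
  ⟨fun h => h rfl, fun h _ => h⟩

theorem joinGraph_adj_of_ne {x y : Σ j, W j} (h : x.1 ≠ y.1) : (joinGraph Γ).Adj x y :=
  fun hxy => absurd hxy h

theorem isClique_joinGraph_iff {C : Set (Σ j, W j)} :
    (joinGraph Γ).IsClique C ↔ ∀ j, (Γ j).IsClique (Sigma.mk j ⁻¹' C) := by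
  constructor
  · intro hC j u hu w hw huw
    exact joinGraph_adj_mk.mp (hC hu hw (sigma_mk_injective.ne huw))
  · rintro hC ⟨j, u⟩ hu ⟨k, w⟩ hw huw (rfl : j = k)
    exact hC j hu hw (ne_of_apply_ne _ huw)

theorem isMaxClique_joinGraph_sigma {K : ∀ j, Set (W j)} (hK : ∀ j, IsMaxClique (Γ j) (K j)) :
    IsMaxClique (joinGraph Γ) (Set.univ.sigma K) := by
  refine ⟨isClique_joinGraph_iff.mpr fun j => ?_, fun C hC hsub => ?_⟩
  · rw [Set.mk_preimage_sigma (Set.mem_univ j)]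
    exact (hK j).1
  · have hslice (j : J) : Sigma.mk j ⁻¹' C = K j :=
      (hK j).2 _ (isClique_joinGraph_iff.mp hC j) fun u hu => hsub ⟨trivial, hu⟩
    ext ⟨j, u⟩
    rw [Set.mk_sigma_iff, ← hslice j]
    exact (and_iff_right trivial).symm

theorem exists_isMaxClique {V : Type*} [Finite V] (Γ : SimpleGraph V) :
    ∃ K, IsMaxClique Γ K := by
  obtain ⟨K, hK⟩ := (Set.toFinite {K | Γ.IsClique K}).exists_maximal ⟨∅, Γ.isClique_empty⟩
  exact ⟨K, hK.prop, fun K' hK' hsub => (hK.eq_of_subset hK' hsub).symm⟩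

theorem ncard_univ_sigma [Fintype J] [∀ j, Finite (W j)] (K : ∀ j, Set (W j)) :
    (Set.univ.sigma K).ncard = ∑ j, (K j).ncard := by
  lift K to ∀ j, Finset (W j) using fun j => (K j).toFinite
  rw [← Finset.coe_univ, ← Finset.coe_sigma, Set.ncard_coe_finset, Finset.card_sigma]
  simp only [Set.ncard_coe_finset]

theorem exists_isMaxClique_joinGraph_ncard_ne [Finite J] [∀ j, Finite (W j)] {j : J}
    {K₁ K₂ : Set (W j)} (h₁ : IsMaxClique (Γ j) K₁) (h₂ : IsMaxClique (Γ j) K₂)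
    (hne : K₁.ncard ≠ K₂.ncard) :
    ∃ C₁ C₂, IsMaxClique (joinGraph Γ) C₁ ∧ IsMaxClique (joinGraph Γ) C₂ ∧
      C₁.ncard ≠ C₂.ncard := by
  classical
  cases nonempty_fintype J
  choose K hK using fun k => exists_isMaxClique (Γ k)
  have hmax {L : Set (W j)} (hL : IsMaxClique (Γ j) L) (k : J) :
      IsMaxClique (Γ k) (Function.update K j L k) :=
    Function.forall_update_iff K (p := fun k => IsMaxClique (Γ k)) |>.mpr ⟨hL, fun k _ => hK k⟩ k
  have hcard (L : Set (W j)) : (Set.univ.sigma (Function.update K j L)).ncard =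
      L.ncard + ∑ k ∈ Finset.univ \ {j}, (K k).ncard := by
    simp only [ncard_univ_sigma, Function.apply_update (fun _ => Set.ncard)]
    exact Finset.sum_update_of_mem (Finset.mem_univ j) _ _
  refine ⟨_, _, isMaxClique_joinGraph_sigma (hmax h₁), isMaxClique_joinGraph_sigma (hmax h₂), ?_⟩
  rw [hcard, hcard]
  exact fun h => hne (Nat.add_right_cancel h)

namespace RAAG

variable (Γ) in
/-- The homomorphism that sends a generator to the corresponding generator of its factor. -/
def joinToPi [DecidableEq J] : RAAG (joinGraph Γ) →* ∀ j, RAAG (Γ j) :=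
  lift (fun x => Pi.mulSingle x.1 (gen (Γ x.1) x.2)) <| by
    rintro ⟨j, u⟩ ⟨k, w⟩ h
    by_cases hjk : j = k
    · subst hjk
      exact (commute_gen (joinGraph_adj_mk.mp h)).map
        (MonoidHom.mulSingle (fun i => RAAG (Γ i)) j)
    · exact Pi.mulSingle_commute hjk _ _

variable (Γ) in
/-- The inclusion of a factor in the right-angled Artin group of a join. -/
def joinInclusion (j : J) : RAAG (Γ j) →* RAAG (joinGraph Γ) :=
  lift (fun u => gen (joinGraph Γ) ⟨j, u⟩) fun _ _ h => commute_gen (joinGraph_adj_mk.mpr h)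

theorem joinToPi_comp_joinInclusion [DecidableEq J] (j : J) :
    (joinToPi Γ).comp (joinInclusion Γ j) = MonoidHom.mulSingle (fun i => RAAG (Γ i)) j := by
  refine hom_ext fun u => ?_
  rw [MonoidHom.comp_apply, joinInclusion, lift_gen, joinToPi, lift_gen, MonoidHom.mulSingle_apply]

theorem commute_joinInclusion {j k : J} (hjk : j ≠ k) (x : RAAG (Γ j)) (y : RAAG (Γ k)) :
    Commute (joinInclusion Γ j x) (joinInclusion Γ k y) := by
  have hmem (i : J) (z : RAAG (Γ i)) :
      joinInclusion Γ i z ∈ special (joinGraph Γ) (Set.range (Sigma.mk i)) := by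
    have hmap : (special (Γ i) Set.univ).map (joinInclusion Γ i) =
        special (joinGraph Γ) (Set.range (Sigma.mk i)) := by
      rw [map_special, special, ← Set.image_univ, Set.image_image]
      simp [joinInclusion]
    rw [← hmap, special_univ]
    exact ⟨z, trivial, rfl⟩
  refine commute_of_mem_special ?_ (hmem j x) (hmem k y)
  rintro _ ⟨u, rfl⟩ _ ⟨w, rfl⟩
  exact commute_gen (joinGraph_adj_of_ne hjk)

theorem bijective_joinToPi [Finite J] [DecidableEq J] : Function.Bijective (joinToPi Γ) := by
  cases nonempty_fintype J
  constructor
  · let back : (∀ j, RAAG (Γ j)) →* RAAG (joinGraph Γ) :=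
      MonoidHom.noncommPiCoprod (joinInclusion Γ) fun _ _ hjk => commute_joinInclusion hjk
    have hback : back.comp (joinToPi Γ) = MonoidHom.id _ := hom_ext fun ⟨j, u⟩ => by
      rw [MonoidHom.comp_apply, joinToPi, lift_gen]
      exact (MonoidHom.noncommPiCoprod_mulSingle _ j _).trans (lift_gen _ _ u)
    exact Function.LeftInverse.injective (g := back) (DFunLike.congr_fun hback)
  · rw [← MonoidHom.range_eq_top, eq_top_iff]
    refine fun f _ => Subgroup.pi_mem_of_mulSingle_mem f fun j => ?_
    exact ⟨joinInclusion Γ j (f j), DFunLike.congr_fun (joinToPi_comp_joinInclusion j) (f j)⟩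

variable {V : Type*} {Λ : SimpleGraph V}

variable (Λ) in
/-- The inclusion of the right-angled Artin group of an induced subgraph. -/
def induceInclusion (S : Set V) : RAAG (Λ.induce S) →* RAAG Λ :=
  lift (fun u => gen Λ u) fun _ _ h => commute_gen h

theorem range_induceInclusion (S : Set V) : (induceInclusion Λ S).range = special Λ S := by
  rw [MonoidHom.range_eq_map, ← special_univ, map_special, special, Set.image_univ]
  simp [induceInclusion, Set.image_eq_range]

theorem injective_induceInclusion (S : Set V) : Function.Injective (induceInclusion Λ S) := by
  classical
  let back : RAAG Λ →* RAAG (Λ.induce S) :=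
    lift (fun v => if hv : v ∈ S then gen (Λ.induce S) ⟨v, hv⟩ else 1) fun v w h => by
      split_ifs
      exacts [commute_gen h, Commute.one_right _, Commute.one_left _, Commute.one_left _]
  have hback : back.comp (induceInclusion Λ S) = MonoidHom.id _ :=
    hom_ext fun u => by simp [back, induceInclusion]
  exact Function.LeftInverse.injective (g := back) (DFunLike.congr_fun hback)

/-- Special subgroups are right-angled Artin groups. -/
noncomputable def induceEquivSpecial (Λ : SimpleGraph V) (S : Set V) :
    RAAG (Λ.induce S) ≃* special Λ S :=
  (MonoidHom.ofInjective (injective_induceInclusion S)).trans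
    (MulEquiv.subgroupCongr (range_induceInclusion S))

open Classical in
/-- A product of special subgroups is the right-angled Artin group of a join. -/
noncomputable def joinEquivPiSpecial [Finite J] (Λ : SimpleGraph V) (S : J → Set V) :
    RAAG (joinGraph fun j => Λ.induce (S j)) ≃*
      Subgroup.pi Set.univ fun j => special Λ (S j) :=
  (MulEquiv.ofBijective _ bijective_joinToPi).trans <|
    (MulEquiv.piCongrRight fun j => induceEquivSpecial Λ (S j)).trans
      { toFun := fun f => ⟨fun j => f j, fun j _ => (f j).2⟩
        invFun := fun f j => ⟨f.1 j, f.2 j trivial⟩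
        map_mul' := fun _ _ => rfl }

end RAAG

end JoinGraph

section OuterAutomorphisms

/-- The class of an automorphism in the outer automorphism group. -/
def outMk (G : Type*) [Group G] : MulAut G →* Out G :=
  QuotientGroup.mk' (MulAut.conj : G →* MulAut G).range

theorem outMk_eq_one_iff {G : Type*} [Group G] {φ : MulAut G} :
    outMk G φ = 1 ↔ ∃ g, MulAut.conj g = φ :=
  QuotientGroup.eq_one_iff φ

theorem finiteIndex_range_outMk_comp {G N : Type*} [Group G] [Group N] {f : N →* MulAut G}
    {L : Subgroup (MulAut G)} [L.FiniteIndex]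
    (hL : ∀ φ ∈ L, ∃ g x, MulAut.conj g * φ = f x) : ((outMk G).comp f).range.FiniteIndex := by
  have hle : L ≤ ((outMk G).comp f).range.comap (outMk G) := by
    intro φ hφ
    obtain ⟨g, x, hgx⟩ := hL φ hφ
    refine ⟨x, ?_⟩
    rw [MonoidHom.comp_apply, ← hgx, map_mul, outMk_eq_one_iff.mpr ⟨g, rfl⟩, one_mul]
  have hsurj : Function.Surjective (outMk G) := QuotientGroup.mk'_surjective _
  constructor
  rw [← Subgroup.index_comap_of_surjective _ hsurj]
  exact (Subgroup.finiteIndex_of_le hle).index_ne_zero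

open RAAG in
theorem IsNearClique.exists_finiteIndex_out_mulEquiv {V : Type*} [Finite V] {Λ : SimpleGraph V}
    {t : V} (hΛ : IsNearClique Λ t) :
    ∃ H : Subgroup (Out (RAAG (corona Λ))), H.FiniteIndex ∧
      Nonempty (H ≃* RAAG (joinGraph fun j => Λ.induce (shiftSupport Λ t j))) := by
  let shiftClass : shiftFamilies Λ t →* Out (RAAG (corona Λ)) :=
    (outMk _).comp ((leafShift Λ).comp (Subgroup.inclusion shiftFamilies_le))
  have hinj : Function.Injective shiftClass := by
    rw [injective_iff_map_eq_one]
    intro f hf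
    obtain ⟨g, hg⟩ := outMk_eq_one_iff.mp hf
    exact hΛ.eq_one_of_leafShift_eq_conj hg.symm
  have : (levelSubgroup (RAAG (corona Λ)) 3).FiniteIndex := finiteIndex_levelSubgroup _ 3
  exact ⟨shiftClass.range,
    finiteIndex_range_outMk_comp fun _ hφ => hΛ.exists_conj_mul_eq_leafShift hφ,
    ⟨(MonoidHom.ofInjective hinj).symm.trans (joinEquivPiSpecial Λ (shiftSupport Λ t)).symm⟩⟩

end OuterAutomorphisms

section Example

theorem isMaxClique_induce_preimage {V : Type*} {Λ : SimpleGraph V} {S K : Set V}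
    (hK : Λ.IsClique K) (hKS : K ⊆ S) (hmax : ∀ u ∈ S \ K, ∃ w ∈ K, ¬Λ.Adj u w) :
    IsMaxClique (Λ.induce S) (Subtype.val ⁻¹' K) := by
  refine ⟨fun u hu w hw huw => hK hu hw (Subtype.val_injective.ne huw), fun K' hK' hsub => ?_⟩
  refine Set.Subset.antisymm (fun u hu => ?_) hsub
  by_contra huK
  obtain ⟨w, hw, huw⟩ := hmax u ⟨u.2, huK⟩
  exact huw (hK' hu (hsub (a := ⟨w, hKS hw⟩) hw) (by rintro rfl; exact huK hw))

/-- The complete graph on `Fin 5` without the edges `{2, 4}` and `{3, 4}`. -/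
abbrev completeMinusTwoEdges : SimpleGraph (Fin 5) :=
  (⊤ : SimpleGraph (Fin 5)).deleteEdges {s(2, 4), s(3, 4)}

theorem isNearClique_completeMinusTwoEdges : IsNearClique completeMinusTwoEdges 4 where
  isClique_compl u hu w hw huw := by
    revert u w
    decide
  exists_not_adj := ⟨2, by decide⟩
  nontrivial_neighborSet := ⟨0, by decide, 1, by decide, by decide⟩

open RAAG in
theorem exists_isMaxClique_induce_shiftSupport_ncard_ne :
    ∃ K₁ K₂ : Set (shiftSupport completeMinusTwoEdges 4 (0, false)),
      IsMaxClique (completeMinusTwoEdges.induce _) K₁ ∧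
        IsMaxClique (completeMinusTwoEdges.induce _) K₂ ∧ K₁.ncard ≠ K₂.ncard := by
  have hsupport : shiftSupport completeMinusTwoEdges 4 (0, false) = {1, 2, 3, 4} := by
    ext u
    change 0 ≠ 4 ∧ completeMinusTwoEdges.Adj 0 u ↔ u ∈ ({1, 2, 3, 4} : Set (Fin 5))
    revert u
    decide
  rw [hsupport]
  have hsub₁ : ({1, 4} : Set (Fin 5)) ⊆ {1, 2, 3, 4} := by simp [Set.insert_subset_iff]
  have hsub₂ : ({1, 2, 3} : Set (Fin 5)) ⊆ {1, 2, 3, 4} := by simp [Set.insert_subset_iff]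
  refine ⟨_, _, isMaxClique_induce_preimage ?_ hsub₁ (by decide),
    isMaxClique_induce_preimage ?_ hsub₂ (by decide), ?_⟩
  · simp [SimpleGraph.isClique_iff, Set.pairwise_insert]
  · simp [SimpleGraph.isClique_iff, Set.pairwise_insert]
  · rw [Set.ncard_preimage_of_injective_subset_range Subtype.val_injective
        (hsub₁.trans Subtype.range_coe.superset),
      Set.ncard_preimage_of_injective_subset_range Subtype.val_injective
        (hsub₂.trans Subtype.range_coe.superset),
      Set.ncard_pair (by decide), Set.ncard_eq_toFinset_card']
    decide

end Example

theorem exists_out_raag_with_finiteIndex_nonduality_raag_subgroup :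
    ∃ (V W : Type) (_ : Fintype V) (_ : Fintype W)
      (Γ : SimpleGraph V) (Δ : SimpleGraph W),
      (∃ H : Subgroup (Out (RAAG Γ)), H.FiniteIndex ∧ Nonempty (H ≃* RAAG Δ)) ∧
      ∃ K₁ K₂ : Set W, IsMaxClique Δ K₁ ∧ IsMaxClique Δ K₂ ∧ K₁.ncard ≠ K₂.ncard := by
  obtain ⟨K₁, K₂, h₁, h₂, hne⟩ := exists_isMaxClique_induce_shiftSupport_ncard_ne
  exact ⟨_, _, inferInstance, Fintype.ofFinite _, _, _,
    isNearClique_completeMinusTwoEdges.exists_finiteIndex_out_mulEquiv,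
    exists_isMaxClique_joinGraph_ncard_ne h₁ h₂ hne⟩
end

section
/- Let G be the free product ℤ² ∗ ℤ³ ∗ ℤ⁴ (the coproduct, over i ∈ Fin 3, of the free abelian groups of ranks 2, 3 and 4, with canonical inclusions ι_i of the factors). Consider the set of elements of Out(G) that are represented by an automorphism φ of G for which there exist elements g₀, g₁, g₂ ∈ G with φ(ι_i(x)) = g_i · ι_i(x) · g_i⁻¹ for all i ∈ Fin 3 and all x in the i-th factor. This set is a subgroup of Out(G), and it is isomorphic to G = ℤ² ∗ ℤ³ ∗ ℤ⁴. -/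
/-- The natural projection from the automorphism group onto the outer automorphism group. -/
def toOut (G : Type*) [Group G] : MulAut G →* Out G :=
  QuotientGroup.mk' _

/-- The factors of the free product ℤ² ∗ ℤ³ ∗ ℤ⁴. -/
abbrev FRFactor (i : Fin 3) : Type := Multiplicative (Fin ((i : ℕ) + 2) → ℤ)

/-- The free product ℤ² ∗ ℤ³ ∗ ℤ⁴. -/
abbrev FRGroup : Type := Monoid.CoprodI FRFactor

/-!
Measure the tuple `g` of conjugators of `φ` by the reduced words of `(g i)⁻¹ * g j`. Composing `φ`
with a suitable Whitehead automorphism with multipliers in the `i`-th factor deletes the initial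
letter from the `i`-th factor of every `(g i)⁻¹ * g j`. When no such letter is left, there is no
cancellation in the images under `φ` of reduced words, so surjectivity of `φ` forces all the `g i`
to coincide, that is, `φ` is inner. Hence the classes of Whitehead automorphisms generate.

For three abelian factors, the Whitehead automorphisms with multipliers in the `i`-th factor `G i`
have classes forming a copy of `G i`. The ratio of the initial letters in `G i` of
`(g i)⁻¹ * g (i + 1)` and `(g i)⁻¹ * g (i + 2)` depends only on the class of `φ`, and it is
nontrivial for at most one `i`. A ping-pong argument then shows that the three copies generate
their free product.
-/

namespace FreeProduct

open Monoid Monoid.CoprodI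

section Words

variable {ι : Type*} {G : ι → Type*} [∀ i, Group (G i)]

open Classical in
/-- The initial letter of the reduced word of `g` if it lies in the `i`-th factor, and `1`
otherwise. -/
noncomputable def head (i : ι) (g : CoprodI G) : G i :=
  (Word.equivPair i (Word.equiv g)).head

/-- What remains of `g` once its initial letter is deleted, if that lies in the `i`-th factor. -/
noncomputable def tail (i : ι) (g : CoprodI G) : CoprodI G :=
  of (head i g)⁻¹ * g

open Classical in
/-- The syllable length: the number of letters of the reduced word of `g`. -/
noncomputable def length (g : CoprodI G) : ℕ :=
  (Word.equiv g).toList.length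

/-- No factor contains both the last letter of `g` and the first letter of `h`, so that the reduced
word of `g * h` is the concatenation of those of `g` and `h`. -/
def IsReducedMul (g h : CoprodI G) : Prop :=
  ∀ i, head i g⁻¹ = 1 ∨ head i h = 1

theorem exists_neWord_prod_eq {g : CoprodI G} (hg : g ≠ 1) :
    ∃ (i j : ι) (w : NeWord G i j), w.prod = g := by
  classical
  have hword : Word.equiv g ≠ Word.empty := fun h =>
    hg (Word.equiv.injective (h.trans (one_smul (CoprodI G) Word.empty).symm))
  obtain ⟨i, j, w, hw⟩ := NeWord.of_word _ hword
  exact ⟨i, j, w, (congrArg Word.prod hw).trans (Word.equiv.symm_apply_apply g)⟩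

theorem length_neWord_prod {i j : ι} (w : NeWord G i j) : length w.prod = w.toList.length := by
  classical
  exact congrArg (fun v : Word G => v.toList.length) (Word.equiv.apply_symm_apply w.toWord)

theorem length_neWord_prod_pos {i j : ι} (w : NeWord G i j) : 0 < length w.prod := by
  rw [length_neWord_prod]
  exact List.length_pos_iff.2 w.toList_ne_nil

theorem head_of_mul {i : ι} (x : G i) (g : CoprodI G) : head i (of x * g) = x * head i g := by
  classical
  have hsmul : Word.equiv (of x * g) = of x • Word.equiv g :=
    mul_smul (of x) g (Word.empty : Word G)
  unfold head
  rw [hsmul, Word.equivPair_smul_same]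

@[simp]
theorem head_one (i : ι) : head i (1 : CoprodI G) = 1 := by
  classical
  have hempty : Word.equiv (1 : CoprodI G) = Word.empty :=
    one_smul (CoprodI G) (Word.empty : Word G)
  unfold head
  rw [hempty, Word.equivPair_eq_of_fstIdx_ne (by simp [Word.fstIdx, Word.empty])]

@[simp]
theorem head_of {i : ι} (x : G i) : head i (of x) = x := by
  simpa using head_of_mul x 1

theorem head_neWord_prod {i j : ι} (w : NeWord G i j) : head i w.prod = w.head := by
  classical
  have hw : Word.equiv w.prod = w.toWord := Word.equiv.apply_symm_apply w.toWord
  have hhead : w.toWord.toList.head w.toList_ne_nil = ⟨i, w.head⟩ :=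
    Option.some_inj.1 ((List.head?_eq_some_head _).symm.trans w.toList_head?)
  unfold head
  rw [hw, Word.equivPair_head, dif_pos ⟨w.toList_ne_nil, by rw [hhead]⟩]
  generalize_proofs _ hidx
  revert hidx
  rw [hhead]
  exact fun _ => rfl

theorem head_neWord_prod_of_ne {i j k : ι} (hik : i ≠ k) (w : NeWord G i j) :
    head k w.prod = 1 := by
  classical
  have hw : Word.equiv w.prod = w.toWord := Word.equiv.apply_symm_apply w.toWord
  have hidx : w.toWord.fstIdx ≠ some k := by
    simpa [Word.fstIdx, NeWord.toWord] using hik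
  unfold head
  rw [hw, Word.equivPair_eq_of_fstIdx_ne hidx]

theorem neWord_head_ne_one {i j : ι} (w : NeWord G i j) : w.head ≠ 1 :=
  w.toWord.ne_one ⟨i, w.head⟩ (List.mem_of_mem_head? (by rw [NeWord.toWord, w.toList_head?]; rfl))

theorem head_neWord_prod_eq_one_iff {i j k : ι} (w : NeWord G i j) :
    head k w.prod = 1 ↔ i ≠ k := by
  refine ⟨?_, fun hik => head_neWord_prod_of_ne hik w⟩
  rintro hhead rfl
  exact neWord_head_ne_one w ((head_neWord_prod w).symm.trans hhead)

theorem head_neWord_prod_inv_eq_one_iff {i j k : ι} (w : NeWord G i j) :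
    head k w.prod⁻¹ = 1 ↔ j ≠ k := by
  rw [← NeWord.inv_prod, head_neWord_prod_eq_one_iff]

theorem head_of_of_ne {i j : ι} (hij : i ≠ j) (x : G i) : head j (of x) = 1 := by
  obtain rfl | hx := eq_or_ne x 1
  · rw [map_one, head_one]
  · simpa using head_neWord_prod_of_ne hij (NeWord.singleton x hx)

@[simp]
theorem length_one : length (1 : CoprodI G) = 0 := by
  classical
  exact congrArg (fun v : Word G => v.toList.length)
    (one_smul (CoprodI G) (Word.empty : Word G))

theorem length_eq_zero_iff {g : CoprodI G} : length g = 0 ↔ g = 1 := by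
  refine ⟨fun hlen => ?_, fun hg => hg ▸ length_one⟩
  by_contra hg
  obtain ⟨i, j, w, rfl⟩ := exists_neWord_prod_eq hg
  exact (length_neWord_prod_pos w).ne' hlen

theorem length_of {i : ι} {x : G i} (hx : x ≠ 1) : length (of x) = 1 := by
  simpa using length_neWord_prod (NeWord.singleton x hx)

theorem length_of_le_one {i : ι} (x : G i) : length (of x) ≤ 1 := by
  obtain rfl | hx := eq_or_ne x 1
  · simp
  · exact (length_of hx).le

theorem of_head_mul_tail (i : ι) (g : CoprodI G) : of (head i g) * tail i g = g := by
  simp [tail]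

@[simp]
theorem head_tail (i : ι) (g : CoprodI G) : head i (tail i g) = 1 := by
  rw [tail, head_of_mul, inv_mul_cancel]

@[simp]
theorem tail_one (i : ι) : tail i (1 : CoprodI G) = 1 := by
  simp [tail]

theorem exists_eq_mul_of (i : ι) (g : CoprodI G) :
    ∃ (d : CoprodI G) (x : G i), g = d * of x ∧ head i d⁻¹ = 1 :=
  ⟨(tail i g⁻¹)⁻¹, (head i g⁻¹)⁻¹, by simp [tail], by simp⟩

theorem IsReducedMul.last_ne_head {i j k l : ι} {v : NeWord G i j} {w : NeWord G k l}
    (hvw : IsReducedMul v.prod w.prod) : j ≠ k := by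
  rintro rfl
  simpa [head_neWord_prod_eq_one_iff, head_neWord_prod_inv_eq_one_iff] using hvw j

theorem IsReducedMul.length_mul {g h : CoprodI G} (hgh : IsReducedMul g h) :
    length (g * h) = length g + length h := by
  obtain rfl | hg := eq_or_ne g 1
  · simp
  obtain rfl | hh := eq_or_ne h 1
  · simp
  obtain ⟨i, j, v, rfl⟩ := exists_neWord_prod_eq hg
  obtain ⟨k, l, w, rfl⟩ := exists_neWord_prod_eq hh
  rw [← NeWord.append_prod (hne := hgh.last_ne_head)]
  simp only [length_neWord_prod, NeWord.toList, List.length_append]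

theorem IsReducedMul.head_mul {i : ι} {g h : CoprodI G} (hgh : IsReducedMul g h)
    (hi : head i h = 1) : head i (g * h) = head i g := by
  obtain rfl | hg := eq_or_ne g 1
  · simpa
  obtain rfl | hh := eq_or_ne h 1
  · simp
  obtain ⟨i', j, v, rfl⟩ := exists_neWord_prod_eq hg
  obtain ⟨k, l, w, rfl⟩ := exists_neWord_prod_eq hh
  rw [← NeWord.append_prod (hne := hgh.last_ne_head)]
  obtain rfl | hii' := eq_or_ne i' i
  · rw [head_neWord_prod, head_neWord_prod, NeWord.append_head]
  · rw [head_neWord_prod_of_ne hii', head_neWord_prod_of_ne hii']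

theorem isReducedMul_of_left {i : ι} (x : G i) {g : CoprodI G} (hg : head i g = 1) :
    IsReducedMul (of x) g := by
  intro j
  obtain rfl | hij := eq_or_ne i j
  · exact Or.inr hg
  · exact Or.inl (by rw [← map_inv, head_of_of_ne hij])

theorem isReducedMul_of_right {i : ι} (x : G i) {g : CoprodI G} (hg : head i g⁻¹ = 1) :
    IsReducedMul g (of x) := by
  intro j
  obtain rfl | hij := eq_or_ne i j
  · exact Or.inl hg
  · exact Or.inr (head_of_of_ne hij x)

theorem isReducedMul_neWord_prod {i j : ι} (v : NeWord G i j) {q : CoprodI G}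
    (hq : head j q = 1) : IsReducedMul v.prod q := by
  intro k
  obtain rfl | hjk := eq_or_ne j k
  · exact Or.inr hq
  · exact Or.inl ((head_neWord_prod_inv_eq_one_iff v).2 hjk)

theorem head_neWord_prod_mul_of_ne {i j k : ι} (hik : i ≠ k) (v : NeWord G i j) {q : CoprodI G}
    (hq : head j q = 1) : head k (v.prod * q) = 1 := by
  obtain rfl | hq1 := eq_or_ne q 1
  · rw [mul_one, head_neWord_prod_of_ne hik]
  · obtain ⟨a, b, w, rfl⟩ := exists_neWord_prod_eq hq1
    have hvw := isReducedMul_neWord_prod v hq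
    rw [← NeWord.append_prod (hne := hvw.last_ne_head), head_neWord_prod_of_ne hik]

theorem isReducedMul_neWord_prod_mul {i j : ι} (v : NeWord G i j) {p q : CoprodI G}
    (hp : head i p⁻¹ = 1) (hq : head j q = 1) : IsReducedMul p (v.prod * q) := by
  intro k
  obtain rfl | hik := eq_or_ne i k
  · exact Or.inl hp
  · exact Or.inr (head_neWord_prod_mul_of_ne hik v hq)

theorem length_mul_neWord_prod_mul {i j : ι} (v : NeWord G i j) {p q : CoprodI G}
    (hp : head i p⁻¹ = 1) (hq : head j q = 1) :
    length (p * (v.prod * q)) = length p + length v.prod + length q := by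
  rw [(isReducedMul_neWord_prod_mul v hp hq).length_mul,
    (isReducedMul_neWord_prod v hq).length_mul, add_assoc]

theorem length_mul_of_mul {i : ι} {x : G i} (hx : x ≠ 1) {p q : CoprodI G}
    (hp : head i p⁻¹ = 1) (hq : head i q = 1) :
    length (p * (of x * q)) = length p + 1 + length q := by
  simpa [length_of hx] using length_mul_neWord_prod_mul (.singleton x hx) hp hq

theorem length_eq_length_of_head_add_length_tail (i : ι) (g : CoprodI G) :
    length g = length (of (head i g)) + length (tail i g) := by
  rw [← (isReducedMul_of_left _ (head_tail i g)).length_mul, of_head_mul_tail]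

theorem length_of_mul_le {i : ι} (x : G i) (g : CoprodI G) :
    length (of x * g) ≤ length g + 1 := by
  have hmul : of x * g = of (x * head i g) * tail i g := by
    rw [map_mul, mul_assoc, of_head_mul_tail]
  have hlen := length_eq_length_of_head_add_length_tail i g
  have hof := length_of_le_one (x * head i g)
  rw [hmul, (isReducedMul_of_left _ (head_tail i g)).length_mul]
  lia

theorem length_mul_le (g h : CoprodI G) : length (g * h) ≤ length g + length h := by
  classical
  suffices H : ∀ l : List (Σ i, G i),
      length ((l.map fun a => of a.2).prod * h) ≤ l.length + length h by
    have hprod : (Word.equiv g).prod = g := Word.equiv.symm_apply_apply g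
    conv_lhs => rw [← hprod]
    exact H _
  intro l
  induction l with
  | nil => simp
  | cons a l ih =>
    have hle := length_of_mul_le a.2 ((l.map fun a => of a.2).prod * h)
    rw [List.map_cons, List.prod_cons, mul_assoc, List.length_cons]
    lia

theorem head_mul_of {i j : ι} (hij : i ≠ j) (g : CoprodI G) (y : G i) :
    head j (g * of y) = head j g := by
  obtain ⟨d, x, rfl, hd⟩ := exists_eq_mul_of i g
  rw [mul_assoc, ← map_mul, (isReducedMul_of_right _ hd).head_mul (head_of_of_ne hij _),
    (isReducedMul_of_right _ hd).head_mul (head_of_of_ne hij _)]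

theorem inv_mul_eq_tail_inv_mul_of_mul_tail (i : ι) (p q : CoprodI G) :
    p⁻¹ * q = (tail i p)⁻¹ * (of ((head i p)⁻¹ * head i q) * tail i q) := by
  simp [tail, mul_assoc]

theorem head_inv_mul_eq_of_head_ne {i j : ι} (hij : i ≠ j) {p q : CoprodI G}
    (hpq : head i p ≠ head i q) : head j (p⁻¹ * q) = head j p⁻¹ := by
  have hx : (head i p)⁻¹ * head i q ≠ 1 := mt inv_mul_eq_one.1 hpq
  have hp : head i (tail i p)⁻¹⁻¹ = 1 := by simp
  have hq : head i (tail i q) = 1 := head_tail i q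
  have hinv : p⁻¹ = (tail i p)⁻¹ * of (head i p)⁻¹ := by simp [tail]
  rw [inv_mul_eq_tail_inv_mul_of_mul_tail i p q, ← NeWord.prod_singleton _ hx,
    (isReducedMul_neWord_prod_mul _ hp hq).head_mul (head_neWord_prod_mul_of_ne hij _ hq),
    hinv, head_mul_of hij]

theorem length_tail_inv_mul_tail_le (i : ι) (p q : CoprodI G) :
    length ((tail i p)⁻¹ * tail i q) ≤ length (p⁻¹ * q) := by
  rw [inv_mul_eq_tail_inv_mul_of_mul_tail i p q]
  obtain hpq | hpq := eq_or_ne (head i p) (head i q)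
  · simp [hpq]
  · have hx : (head i p)⁻¹ * head i q ≠ 1 := mt inv_mul_eq_one.1 hpq
    rw [length_mul_of_mul hx (by simp) (head_tail i q)]
    have hle := length_mul_le (tail i p)⁻¹ (tail i q)
    lia

theorem length_tail_lt {i : ι} {g : CoprodI G} (hg : head i g ≠ 1) :
    length (tail i g) < length g := by
  rw [length_eq_length_of_head_add_length_tail i g, length_of hg]
  lia

theorem mem_range_of_of_conj_mem_range {i : ι} {x : G i} (hx : x ≠ 1) {c : CoprodI G}
    (hc : c * of x * c⁻¹ ∈ (of : G i →* CoprodI G).range) :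
    c ∈ (of : G i →* CoprodI G).range := by
  obtain ⟨d, y, rfl, hd⟩ := exists_eq_mul_of i c
  obtain ⟨z, hz⟩ := hc
  have hconj : d * (of (y * x * y⁻¹) * d⁻¹) = of z := by
    rw [hz]
    simp [mul_assoc]
  have hyx : y * x * y⁻¹ ≠ 1 := mt conj_eq_one_iff.1 hx
  have hlen := length_mul_of_mul hyx hd hd
  have hz1 := length_of_le_one z
  rw [hconj] at hlen
  have hd1 : d = 1 := length_eq_zero_iff.1 (by lia)
  exact ⟨y, by rw [hd1, one_mul]⟩

theorem exists_neWord_prod_eq_mul_mul {i j k l : ι} (v : NeWord G i j) (w : NeWord G k l)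
    (hjk : j ≠ k) {u : CoprodI G} (hj : head j u = 1) (hk : head k u⁻¹ = 1) :
    ∃ t : NeWord G i l, t.prod = v.prod * u * w.prod := by
  obtain rfl | hu := eq_or_ne u 1
  · exact ⟨.append v hjk w, by rw [NeWord.append_prod, mul_one]⟩
  · obtain ⟨a, b, t, rfl⟩ := exists_neWord_prod_eq hu
    have hja : j ≠ a := ((head_neWord_prod_eq_one_iff t).1 hj).symm
    have hbk : b ≠ k := (head_neWord_prod_inv_eq_one_iff t).1 hk
    exact ⟨.append (.append v hja t) hbk w, by rw [NeWord.append_prod, NeWord.append_prod]⟩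

end Words

section PureSymmetric

variable {ι : Type*} {G : ι → Type*} [∀ i, Group (G i)]

/-- `φ` acts on the `i`-th factor as conjugation by `g i`. -/
def IsConjugatedBy (φ : MulAut (CoprodI G)) (g : ι → CoprodI G) : Prop :=
  ∀ (i : ι) (x : G i), φ (of x) = g i * of x * (g i)⁻¹

namespace IsConjugatedBy

variable {φ ψ : MulAut (CoprodI G)} {g h : ι → CoprodI G}

theorem one : IsConjugatedBy (1 : MulAut (CoprodI G)) 1 := fun i x => by simp

theorem mul (hφ : IsConjugatedBy φ g) (hψ : IsConjugatedBy ψ h) :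
    IsConjugatedBy (φ * ψ) fun i => φ (h i) * g i := by
  intro i x
  simp only [MulAut.mul_apply, hψ i x, map_mul, map_inv, hφ i x]
  group

theorem inv (hφ : IsConjugatedBy φ g) : IsConjugatedBy φ⁻¹ fun i => (φ⁻¹ (g i))⁻¹ := by
  intro i x
  apply φ.injective
  simp only [map_mul, map_inv, MulAut.apply_inv_self, hφ i x]
  group

theorem conj_mul (hφ : IsConjugatedBy φ g) (c : CoprodI G) :
    IsConjugatedBy (MulAut.conj c * φ) fun i => c * g i := by
  intro i x
  simp only [MulAut.mul_apply, MulAut.conj_apply, hφ i x]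
  group

theorem eq_conj {c : CoprodI G} (hφ : IsConjugatedBy φ fun _ => c) : φ = MulAut.conj c :=
  MulEquiv.toMonoidHom_injective <|
    CoprodI.ext_hom _ _ fun i => MonoidHom.ext fun x => hφ i x

theorem exists_eq_mul_of (hg : IsConjugatedBy φ g) (hh : IsConjugatedBy φ h) (i : ι)
    [Nontrivial (G i)] : ∃ x : G i, h i = g i * of x := by
  obtain ⟨y, hy⟩ := exists_ne (1 : G i)
  have hconj : (g i)⁻¹ * h i * of y * ((g i)⁻¹ * h i)⁻¹ = of y :=
    calc _ = (g i)⁻¹ * (h i * of y * (h i)⁻¹) * g i := by group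
      _ = of y := by rw [← hh i y, hg i y]; group
  obtain ⟨x, hx⟩ := mem_range_of_of_conj_mem_range hy ⟨y, hconj.symm⟩
  exact ⟨x, by rw [hx, mul_inv_cancel_left]⟩

theorem exists_neWord_prod_eq (hφ : IsConjugatedBy φ g)
    (hred : ∀ i j, head i ((g i)⁻¹ * g j) = 1) {i j : ι} (w : NeWord G i j) :
    ∃ v : NeWord G i j, v.prod = (g i)⁻¹ * φ w.prod * g j := by
  induction w with
  | singleton x hx =>
    refine ⟨.singleton x hx, ?_⟩
    rw [NeWord.prod_singleton, hφ]
    group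
  | @append i j k l w₁ hjk w₂ ih₁ ih₂ =>
    obtain ⟨v₁, hv₁⟩ := ih₁
    obtain ⟨v₂, hv₂⟩ := ih₂
    obtain ⟨v, hv⟩ := exists_neWord_prod_eq_mul_mul v₁ v₂ hjk (hred j k)
      (by simpa using hred k j)
    refine ⟨v, ?_⟩
    rw [hv, hv₁, hv₂, NeWord.append_prod, map_mul]
    group

theorem eq_of_head_eq_one (hφ : IsConjugatedBy φ g)
    (hred : ∀ i j, head i ((g i)⁻¹ * g j) = 1) (k l : ι) [Nontrivial (G k)] : g k = g l := by
  obtain ⟨y, hy⟩ := exists_ne (1 : G k)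
  obtain ⟨z, hz⟩ := φ.surjective (g l * of y * (g l)⁻¹)
  have hz1 : z ≠ 1 := by
    rintro rfl
    rw [map_one, eq_comm, conj_eq_one_iff] at hz
    exact hy (of_injective k (hz.trans (map_one of).symm))
  obtain ⟨i, j, w, rfl⟩ := FreeProduct.exists_neWord_prod_eq hz1
  obtain ⟨v, hv⟩ := hφ.exists_neWord_prod_eq hred w
  set p := ((g i)⁻¹ * g l)⁻¹
  set q := (g j)⁻¹ * g l
  have hy_eq : of y = p * (v.prod * q) := by
    simp only [p, q, hv, hz]
    group
  have hlen := length_mul_neWord_prod_mul v (p := p) (by simpa [p] using hred i l) (hred j l)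
  have hpos := length_neWord_prod_pos v
  rw [← hy_eq, length_of hy] at hlen
  have hp : p = 1 := length_eq_zero_iff.1 (by lia)
  have hq : q = 1 := length_eq_zero_iff.1 (by lia)
  have hik : i = k := by
    by_contra hik
    rw [hp, hq, one_mul, mul_one] at hy_eq
    exact hy (by rw [← head_of y, hy_eq, head_neWord_prod_of_ne hik])
  rw [← hik]
  exact inv_mul_eq_one.1 (inv_eq_one.1 hp)

end IsConjugatedBy

variable (G) in
/-- The pure symmetric automorphisms: those acting on each factor as a conjugation. -/
def pureSymmetricAut : Subgroup (MulAut (CoprodI G)) where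
  carrier := {φ | ∃ g, IsConjugatedBy φ g}
  one_mem' := ⟨_, .one⟩
  mul_mem' := fun ⟨_, hφ⟩ ⟨_, hψ⟩ => ⟨_, hφ.mul hψ⟩
  inv_mem' := fun ⟨_, hφ⟩ => ⟨_, hφ.inv⟩

variable (G) in
/-- The group `PSO` of pure symmetric outer automorphisms of a free product, also known as its
Fouxe-Rabinovitch group. -/
def pureSymmetricOut : Subgroup (Out (CoprodI G)) :=
  (pureSymmetricAut G).map (toOut _)

theorem toOut_conj {H : Type*} [Group H] (c : H) : toOut H (MulAut.conj c) = 1 :=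
  (QuotientGroup.eq_one_iff _).2 ⟨c, rfl⟩

theorem exists_conj_mul_eq_of_toOut_eq {H : Type*} [Group H] {φ ψ : MulAut H}
    (h : toOut H φ = toOut H ψ) : ∃ c, MulAut.conj c * φ = ψ := by
  have hone : toOut H (ψ * φ⁻¹) = 1 := by rw [map_mul, map_inv, h, mul_inv_cancel]
  obtain ⟨c, hc⟩ := (QuotientGroup.eq_one_iff _).1 hone
  exact ⟨c, by rw [hc, inv_mul_cancel_right]⟩

/-- The total syllable length of all the `(g i)⁻¹ * g j`. -/
noncomputable def spread [Fintype ι] (g : ι → CoprodI G) : ℕ :=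
  ∑ i, ∑ j, length ((g i)⁻¹ * g j)

theorem spread_mul_tail_lt [Fintype ι] {g : ι → CoprodI G} {i j : ι}
    (hij : head i ((g i)⁻¹ * g j) ≠ 1) :
    spread (fun k => g i * tail i ((g i)⁻¹ * g k)) < spread g := by
  have hle (k l : ι) : length ((g i * tail i ((g i)⁻¹ * g k))⁻¹ * (g i * tail i ((g i)⁻¹ * g l))) ≤
      length ((g k)⁻¹ * g l) := by
    simpa [mul_assoc] using length_tail_inv_mul_tail_le i ((g i)⁻¹ * g k) ((g i)⁻¹ * g l)
  have hlt : length ((g i * tail i ((g i)⁻¹ * g i))⁻¹ * (g i * tail i ((g i)⁻¹ * g j))) <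
      length ((g i)⁻¹ * g j) := by
    simpa using length_tail_lt hij
  exact Finset.sum_lt_sum (fun k _ => Finset.sum_le_sum fun l _ => hle k l)
    ⟨i, Finset.mem_univ i, Finset.sum_lt_sum (fun l _ => hle i l) ⟨j, Finset.mem_univ j, hlt⟩⟩

/-- The ratio of the initial letters in the `i`-th factor of `(g i)⁻¹ * g j` and `(g i)⁻¹ * g k`,
an invariant of the outer class of an automorphism conjugated by `g`. -/
noncomputable def headRatio (g : ι → CoprodI G) (i j k : ι) : G i :=
  head i ((g i)⁻¹ * g j) / head i ((g i)⁻¹ * g k)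

theorem headRatio_eq_one_of_ne_one {g : ι → CoprodI G} {i j k : ι} (hij : i ≠ j)
    (h : headRatio g i j k ≠ 1) : headRatio g j k i = 1 := by
  have hne : head i ((g i)⁻¹ * g j) ≠ head i ((g i)⁻¹ * g k) := mt div_eq_one.2 h
  exact div_eq_one.2 (by simpa [mul_assoc] using head_inv_mul_eq_of_head_ne hij hne)

end PureSymmetric

section Whitehead

variable {ι : Type*} {G : ι → Type*} [∀ i, CommGroup (G i)]

/-- The endomorphism conjugating the `j`-th factor by `a j`, for multipliers `a j` in the `i`-th
factor. -/
def whiteheadHom (i : ι) (a : ι → G i) : CoprodI G →* CoprodI G :=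
  lift fun j => (MulAut.conj (of (a j))).toMonoidHom.comp of

theorem whiteheadHom_of {i : ι} (a : ι → G i) {j : ι} (x : G j) :
    whiteheadHom i a (of x) = of (a j) * of x * (of (a j))⁻¹ := by
  simp [whiteheadHom]

theorem whiteheadHom_of_same {i : ι} (a : ι → G i) (x : G i) :
    whiteheadHom i a (of x) = of x := by
  rw [whiteheadHom_of, ← map_mul, ← map_inv, ← map_mul, mul_inv_cancel_comm]

theorem whiteheadHom_one (i : ι) : whiteheadHom i (1 : ι → G i) = .id (CoprodI G) :=
  CoprodI.ext_hom _ _ fun j => MonoidHom.ext fun x => by simp [whiteheadHom_of]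

theorem whiteheadHom_mul {i : ι} (a b : ι → G i) :
    whiteheadHom i (a * b) = (whiteheadHom i a).comp (whiteheadHom i b) := by
  refine CoprodI.ext_hom _ _ fun j => MonoidHom.ext fun x => ?_
  simp only [MonoidHom.comp_apply, whiteheadHom_of b, map_mul, map_inv, whiteheadHom_of_same]
  rw [whiteheadHom_of, whiteheadHom_of, Pi.mul_apply, mul_comm (a j), map_mul]
  group

/-- The Whitehead automorphisms with multipliers in the `i`-th factor: the `j`-th factor is
conjugated by `a j`. The multiplier `a i` has no effect, the `i`-th factor being abelian. -/
def whitehead (i : ι) : (ι → G i) →* MulAut (CoprodI G) where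
  toFun a := (whiteheadHom i a).toMulEquiv (whiteheadHom i a⁻¹)
    (by rw [← whiteheadHom_mul, inv_mul_cancel, whiteheadHom_one])
    (by rw [← whiteheadHom_mul, mul_inv_cancel, whiteheadHom_one])
  map_one' := MulEquiv.ext fun z => DFunLike.congr_fun (whiteheadHom_one i) z
  map_mul' a b := MulEquiv.ext fun z => DFunLike.congr_fun (whiteheadHom_mul a b) z

theorem isConjugatedBy_whitehead {i : ι} (a : ι → G i) :
    IsConjugatedBy (whitehead i a) fun j => of (a j) :=
  fun _ x => whiteheadHom_of a x

theorem whitehead_const {i : ι} (x : G i) :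
    whitehead i (fun _ => x) = MulAut.conj (of x) :=
  (isConjugatedBy_whitehead fun _ => x).eq_conj

theorem whitehead_congr {i : ι} {a b : ι → G i} (hab : ∀ j ≠ i, a j = b j) :
    whitehead i a = whitehead i b := by
  refine MulEquiv.toMonoidHom_injective <|
    CoprodI.ext_hom _ _ fun j => MonoidHom.ext fun x => ?_
  change whiteheadHom i a (of x) = whiteheadHom i b (of x)
  obtain rfl | hj := eq_or_ne j i
  · rw [whiteheadHom_of_same, whiteheadHom_of_same]
  · rw [whiteheadHom_of, whiteheadHom_of, hab j hj]

theorem IsConjugatedBy.mul_whitehead {φ : MulAut (CoprodI G)} {g : ι → CoprodI G}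
    (hφ : IsConjugatedBy φ g) {i : ι} (a : ι → G i) :
    IsConjugatedBy (φ * whitehead i a) fun j => g i * of (a j) * (g i)⁻¹ * g j := by
  simpa only [hφ i _] using hφ.mul (isConjugatedBy_whitehead a)

theorem IsConjugatedBy.toOut_mem_iSup_range_whitehead [Finite ι] [∀ i, Nontrivial (G i)]
    {φ : MulAut (CoprodI G)} {g : ι → CoprodI G} (hφ : IsConjugatedBy φ g) :
    toOut _ φ ∈ ⨆ i, ((toOut _).comp (whitehead (G := G) i)).range := by
  cases nonempty_fintype ι
  induction hn : spread g using Nat.strong_induction_on generalizing φ g with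
  | _ n ih =>
    by_cases hred : ∀ i j, head i ((g i)⁻¹ * g j) = 1
    · obtain ⟨c, hc⟩ : ∃ c, ∀ k, g k = c := by
        obtain _ | ⟨⟨l⟩⟩ := isEmpty_or_nonempty ι
        · exact ⟨1, isEmptyElim⟩
        · exact ⟨g l, fun k => hφ.eq_of_head_eq_one hred k l⟩
      obtain rfl : g = fun _ => c := funext hc
      rw [hφ.eq_conj, toOut_conj]
      exact one_mem _
    · push Not at hred
      obtain ⟨i, j, hij⟩ := hred
      have hstep := hφ.mul_whitehead fun k => (head i ((g i)⁻¹ * g k))⁻¹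
      have htail : (fun k => g i * of (head i ((g i)⁻¹ * g k))⁻¹ * (g i)⁻¹ * g k) =
          fun k => g i * tail i ((g i)⁻¹ * g k) := by
        funext k
        simp only [tail, mul_assoc]
      rw [htail] at hstep
      have hmem := ih _ (hn ▸ spread_mul_tail_lt hij) hstep rfl
      rw [map_mul] at hmem
      refine (Subgroup.mul_mem_cancel_right _ ?_).1 hmem
      exact Subgroup.mem_iSup_of_mem i ⟨_, rfl⟩

theorem pureSymmetricOut_eq_iSup_range_whitehead [Finite ι] [∀ i, Nontrivial (G i)] :
    pureSymmetricOut G = ⨆ i, ((toOut _).comp (whitehead (G := G) i)).range := by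
  refine le_antisymm ?_ (iSup_le fun i => ?_)
  · rintro _ ⟨φ, ⟨g, hφ⟩, rfl⟩
    exact hφ.toOut_mem_iSup_range_whitehead
  · rintro _ ⟨a, rfl⟩
    exact ⟨_, ⟨_, isConjugatedBy_whitehead a⟩, rfl⟩

theorem headRatio_eq_of_toOut_eq [∀ i, Nontrivial (G i)] {φ ψ : MulAut (CoprodI G)}
    {g h : ι → CoprodI G} (hφ : IsConjugatedBy φ g) (hψ : IsConjugatedBy ψ h)
    (hout : toOut _ φ = toOut _ ψ) {i j k : ι} (hj : j ≠ i) (hk : k ≠ i) :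
    headRatio g i j k = headRatio h i j k := by
  obtain ⟨c, rfl⟩ := exists_conj_mul_eq_of_toOut_eq hout
  choose y hy using (hφ.conj_mul c).exists_eq_mul_of hψ
  have hhead {l : ι} (hl : l ≠ i) :
      head i ((h i)⁻¹ * h l) = (y i)⁻¹ * head i ((g i)⁻¹ * g l) := by
    have hword : (h i)⁻¹ * h l = of (y i)⁻¹ * ((g i)⁻¹ * g l) * of (y l) := by
      rw [hy i, hy l, map_inv]
      group
    rw [hword, head_mul_of hl, head_of_mul]
  rw [headRatio, headRatio, hhead hj, hhead hk, mul_div_mul_left_eq_div]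

theorem headRatio_mul_whitehead (g : ι → CoprodI G) {i : ι} (a : ι → G i) (j k : ι) :
    headRatio (fun l => g i * of (a l) * (g i)⁻¹ * g l) i j k =
      a j / a k * headRatio g i j k := by
  have hhead (l : ι) :
      head i ((g i * of (a i) * (g i)⁻¹ * g i)⁻¹ * (g i * of (a l) * (g i)⁻¹ * g l)) =
        (a i)⁻¹ * a l * head i ((g i)⁻¹ * g l) := by
    rw [← head_of_mul, map_mul, map_inv]
    congr 1
    group
  rw [headRatio, headRatio, hhead, hhead, mul_assoc, mul_assoc, mul_div_mul_left_eq_div,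
    mul_div_mul_comm]

end Whitehead

section ThreeFactors

variable {G : Fin 3 → Type*} [∀ i, CommGroup (G i)]

/-- The outer automorphism conjugating the factor `i + 1` (modulo `3`) by a given element of the
`i`-th factor, and fixing the other factors. -/
def twist (i : Fin 3) : G i →* Out (CoprodI G) :=
  ((toOut _).comp (whitehead i)).comp (MonoidHom.mulSingle (fun _ => G i) (i + 1))

theorem toOut_whitehead_eq_twist {i : Fin 3} (a : Fin 3 → G i) :
    toOut _ (whitehead i a) = twist i (a (i + 1) / a (i + 2)) := by
  have hfactor : whitehead i a =
      whitehead i (Pi.mulSingle (i + 1) (a (i + 1) / a (i + 2)) * fun _ => a (i + 2)) := by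
    refine whitehead_congr fun j hj => ?_
    obtain rfl | rfl : j = i + 1 ∨ j = i + 2 := by lia
    · simp
    · simp
  rw [hfactor, map_mul, map_mul, whitehead_const, toOut_conj, mul_one]
  rfl

theorem pureSymmetricOut_eq_range_lift_twist [∀ i, Nontrivial (G i)] :
    pureSymmetricOut G = (lift (twist (G := G))).range := by
  rw [pureSymmetricOut_eq_iSup_range_whitehead, CoprodI.range_eq_iSup]
  refine iSup_congr fun i => le_antisymm ?_ ?_
  · rintro _ ⟨a, rfl⟩
    exact ⟨_, (toOut_whitehead_eq_twist a).symm⟩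
  · rintro _ ⟨x, rfl⟩
    exact ⟨_, rfl⟩

theorem headRatio_cyclic_eq_one {g : Fin 3 → CoprodI G} {i j : Fin 3} (hij : i ≠ j)
    (hi : headRatio g i (i + 1) (i + 2) ≠ 1) : headRatio g j (j + 1) (j + 2) = 1 := by
  have hsucc (k : Fin 3) (hk : headRatio g k (k + 1) (k + 2) ≠ 1) :
      headRatio g (k + 1) (k + 1 + 1) (k + 1 + 2) = 1 := by
    have h1 : k + 1 + 1 = k + 2 := by lia
    have h2 : k + 1 + 2 = k := by lia
    rw [h1, h2]
    exact headRatio_eq_one_of_ne_one (by simp) hk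
  obtain rfl | rfl : j = i + 1 ∨ i = j + 1 := by lia
  · exact hsucc i hi
  · by_contra hj
    exact hi (hsucc j hj)

/-- The ping-pong sets for `twist`. The inverse is taken because `twist` changes the conjugators of
an automorphism by composition on the right, while ping-pong is played with a left action. -/
def pingPongSet (i : Fin 3) : Set (Out (CoprodI G)) :=
  {Φ | ∃ (φ : MulAut (CoprodI G)) (g : Fin 3 → CoprodI G),
    toOut _ φ = Φ⁻¹ ∧ IsConjugatedBy φ g ∧ headRatio g i (i + 1) (i + 2) ≠ 1}

theorem twist_mul_mem_pingPongSet {i : Fin 3} {φ : MulAut (CoprodI G)} {g : Fin 3 → CoprodI G}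
    {Φ : Out (CoprodI G)} (hφ : IsConjugatedBy φ g) (hΦ : toOut _ φ = Φ⁻¹)
    (hg : headRatio g i (i + 1) (i + 2) = 1) {x : G i} (hx : x ≠ 1) :
    twist i x * Φ ∈ pingPongSet i := by
  refine ⟨_, _, ?_, hφ.mul_whitehead (Pi.mulSingle (i + 1) x⁻¹), ?_⟩
  · rw [map_mul, hΦ, mul_inv_rev, ← map_inv]
    rfl
  · rw [headRatio_mul_whitehead, hg]
    simpa using hx

theorem disjoint_pingPongSet [∀ i, Nontrivial (G i)] {i j : Fin 3} (hij : i ≠ j) :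
    Disjoint (pingPongSet (G := G) i) (pingPongSet j) := by
  rw [Set.disjoint_left]
  rintro Φ ⟨φ, g, hφΦ, hφ, hi⟩ ⟨ψ, h, hψΦ, hψ, hj⟩
  rw [← headRatio_eq_of_toOut_eq hφ hψ (hφΦ.trans hψΦ.symm) (by simp) (by simp)] at hj
  exact hj (headRatio_cyclic_eq_one hij hi)

open scoped Pointwise in
theorem lift_twist_injective [∀ i, Nontrivial (G i)] :
    Function.Injective (lift (twist (G := G))) := by
  refine CoprodI.lift_injective_of_ping_pong twist (Or.inl (by simp)) pingPongSet
    (fun i => ?_) (fun i j hij => disjoint_pingPongSet (G := G) hij) ?_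
  · obtain ⟨x, hx⟩ := exists_ne (1 : G i)
    exact ⟨_, twist_mul_mem_pingPongSet (Φ := 1) .one (by simp) (by simp [headRatio]) hx⟩
  · rintro i j hij x hx _ ⟨Φ, ⟨φ, g, hφΦ, hφ, hj⟩, rfl⟩
    exact twist_mul_mem_pingPongSet hφ hφΦ (headRatio_cyclic_eq_one hij.symm hj) hx

/-- The pure symmetric outer automorphism group of a free product of three nontrivial abelian
groups is isomorphic to the free product. -/
noncomputable def freeProductEquivPureSymmetricOut [∀ i, Nontrivial (G i)] :
    CoprodI G ≃* pureSymmetricOut G :=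
  (MonoidHom.ofInjective lift_twist_injective).trans
    (MulEquiv.subgroupCongr pureSymmetricOut_eq_range_lift_twist.symm)

end ThreeFactors

end FreeProduct

theorem pso_z2_z3_z4_iso_general {G : Fin 3 → Type*} [∀ i, CommGroup (G i)]
    [∀ i, Nontrivial (G i)] :
    ∃ H : Subgroup (Out (Monoid.CoprodI G)),
      (H : Set (Out (Monoid.CoprodI G))) =
        {Φ : Out (Monoid.CoprodI G) | ∃ φ : MulAut (Monoid.CoprodI G),
          toOut (Monoid.CoprodI G) φ = Φ ∧
          ∃ g : Fin 3 → Monoid.CoprodI G, ∀ (i : Fin 3) (x : G i),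
            φ (Monoid.CoprodI.of x) = g i * Monoid.CoprodI.of x * (g i)⁻¹} ∧
      Nonempty (H ≃* Monoid.CoprodI G) :=
  ⟨FreeProduct.pureSymmetricOut G, Set.ext fun _ => exists_congr fun _ => and_comm,
    ⟨FreeProduct.freeProductEquivPureSymmetricOut.symm⟩⟩

theorem pso_z2_z3_z4_iso :
    ∃ H : Subgroup (Out FRGroup),
      (H : Set (Out FRGroup)) =
        {Φ : Out FRGroup | ∃ φ : MulAut FRGroup, toOut FRGroup φ = Φ ∧
          ∃ g : Fin 3 → FRGroup, ∀ (i : Fin 3) (x : FRFactor i),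
            φ (Monoid.CoprodI.of x) = g i * Monoid.CoprodI.of x * (g i)⁻¹} ∧
      Nonempty (H ≃* FRGroup) :=
  pso_z2_z3_z4_iso_general
end
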